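/- arXiv:2501.02942 — 8 statements merged into one kernel-verified Lean document; each statement's English description precedes it below -/
import Mathlib

section
/- For every integer m ≥ 1, every λ ∈ [0,1], and every T ≥ 0, the following identity holds: ∫₀^T e^{−t·m(1−λ)}·(1 + 2tmλ)^{−3/2} dt = E_{Z∼N(0,1)}[ Z²·(1 − e^{−T(m(1−λ)+mλZ²)})/(m(1−λ)+mλZ²) ], where Z is a standard Gaussian real random variable, and in the case λ = 1 the integrand on the right-hand side is the almost-surely finite quantity Z²(1 − e^{−TmZ²})/(mZ²). -/
open MeasureTheory ProbabilityTheory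

/-!
Write `a = m(1 - λ)` and `b = mλ`. Since `(1 - e^{-Tc}) / c = ∫₀ᵀ e^{-tc} dt`, taken at
`c = a + bZ²`, Fubini reduces the claim to `E[Z² e^{-sZ²}] = (1 + 2s)^{-3/2}` at `s = tb`. The
weight `e^{-sz²}` turns the density of `N(0, 1)` into `(1 + 2s)^{-1/2}` times that of
`N(0, 1 / (1 + 2s))`, whose second moment is `1 / (1 + 2s)`.
As `t ↦ e^{-tc}` is monotone, its two endpoint values dominate the integrand in Fubini's theorem,
and both are integrable against `Z²` as soon as `1 + 2Tb > 0`.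
-/

open Real
open scoped NNReal

section LaplaceFubini

lemma exp_neg_mul_le_one_add_exp_neg_mul {t T : ℝ} (ht : t ∈ Set.uIcc 0 T) (c : ℝ) :
    exp (-t * c) ≤ 1 + exp (-T * c) := by
  have between : -t * c ≤ max 0 (-T * c) := by
    rcases Set.mem_uIcc.1 ht with ⟨h₀, h₁⟩ | ⟨h₀, h₁⟩ <;> rcases le_total 0 c with hc | hc <;>
      simp only [le_max_iff] <;> first | (left; nlinarith) | (right; nlinarith)
  calc exp (-t * c) ≤ exp (max 0 (-T * c)) := exp_le_exp.2 between
    _ = max 1 (exp (-T * c)) := by rw [exp_monotone.map_max, exp_zero]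
    _ ≤ 1 + exp (-T * c) := max_le_add_of_nonneg zero_le_one (exp_pos _).le

lemma integral_exp_neg_mul {c : ℝ} (hc : c ≠ 0) (T : ℝ) :
    ∫ t in (0 : ℝ)..T, exp (-t * c) = (1 - exp (-T * c)) / c := by
  simp_rw [neg_mul_comm]
  rw [intervalIntegral.integral_comp_mul_right _ (neg_ne_zero.2 hc), integral_exp, smul_eq_mul,
    zero_mul, exp_zero]
  field_simp
  ring

variable {X : Type*} [MeasurableSpace X] {μ : Measure X} [SFinite μ] {f g : X → ℝ} {T : ℝ}

lemma integrable_uncurry_mul_exp_neg_mul (hg : AEMeasurable g μ) (hf : Integrable f μ)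
    (hfT : Integrable (fun x ↦ f x * exp (-T * g x)) μ) :
    Integrable (Function.uncurry fun t x ↦ f x * exp (-t * g x))
      ((volume.restrict (Set.uIoc 0 T)).prod μ) := by
  have : IsFiniteMeasure (volume.restrict (Set.uIoc 0 T)) :=
    inferInstanceAs (IsFiniteMeasure (volume.restrict (Set.Ioc _ _)))
  have dominating := (hf.norm.add hfT.norm).comp_snd (volume.restrict (Set.uIoc 0 T))
  have measurable_exponent : AEMeasurable (fun p : ℝ × X ↦ -p.1 * g p.2)
      ((volume.restrict (Set.uIoc 0 T)).prod μ) :=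
    measurable_fst.neg.aemeasurable.mul hg.comp_snd
  refine dominating.mono'
    (hf.aestronglyMeasurable.comp_snd.mul measurable_exponent.exp.aestronglyMeasurable) ?_
  have fst_mem : ∀ᵐ p ∂(volume.restrict (Set.uIoc 0 T)).prod μ, p.1 ∈ Set.uIoc 0 T :=
    Measure.quasiMeasurePreserving_fst.ae (ae_restrict_mem measurableSet_uIoc)
  filter_upwards [fst_mem] with ⟨t, x⟩ ht
  calc ‖f x * exp (-t * g x)‖ = ‖f x‖ * exp (-t * g x) := by
        rw [norm_mul, norm_of_nonneg (exp_pos _).le]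
    _ ≤ ‖f x‖ * (1 + exp (-T * g x)) := by
        gcongr
        exact exp_neg_mul_le_one_add_exp_neg_mul (Set.uIoc_subset_uIcc ht) _
    _ = ‖f x‖ + ‖f x * exp (-T * g x)‖ := by
        rw [norm_mul, norm_of_nonneg (exp_pos _).le]
        ring

lemma integral_mul_one_sub_exp_neg_mul_div (hg : AEMeasurable g μ) (hg₀ : ∀ᵐ x ∂μ, g x ≠ 0)
    (hf : Integrable f μ) (hfT : Integrable (fun x ↦ f x * exp (-T * g x)) μ) :
    ∫ x, f x * (1 - exp (-T * g x)) / g x ∂μ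
      = ∫ t in (0 : ℝ)..T, ∫ x, f x * exp (-t * g x) ∂μ := by
  rw [intervalIntegral_integral_swap (integrable_uncurry_mul_exp_neg_mul hg hf hfT)]
  refine integral_congr_ae ?_
  filter_upwards [hg₀] with x hx
  rw [intervalIntegral.integral_const_mul, integral_exp_neg_mul hx, mul_div_assoc]

end LaplaceFubini

lemma ae_polynomial_eval_ne_zero {R : Type*} [CommRing R] [IsDomain R] [MeasurableSpace R]
    {μ : Measure R} [NullSingletonClass μ] {p : Polynomial R} (hp : p ≠ 0) :
    ∀ᵐ x ∂μ, p.eval x ≠ 0 := by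
  simpa [ae_iff] using (Polynomial.finite_setOfPred_isRoot hp).measure_zero μ

lemma ae_add_mul_sq_ne_zero {R : Type*} [CommRing R] [IsDomain R] [MeasurableSpace R]
    {μ : Measure R} [NullSingletonClass μ] {a b : R} (hab : a ≠ 0 ∨ b ≠ 0) :
    ∀ᵐ x ∂μ, a + b * x ^ 2 ≠ 0 := by
  have poly_ne_zero : Polynomial.C a + Polynomial.C b * Polynomial.X ^ 2 ≠ 0 := by
    intro h
    have coeff_zero : a = 0 := by simpa using congrArg (Polynomial.coeff · 0) h
    have coeff_two : b = 0 := by simpa [Polynomial.coeff_C] using congrArg (Polynomial.coeff · 2) h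
    exact hab.elim (· coeff_zero) (· coeff_two)
  simpa using ae_polynomial_eval_ne_zero (μ := μ) poly_ne_zero

section GaussianTilt

lemma integral_sq_gaussianReal (v : ℝ≥0) : ∫ z, z ^ 2 ∂gaussianReal 0 v = v := by
  rw [← variance_id_gaussianReal (μ := 0), variance_of_integral_eq_zero aemeasurable_id] <;> simp

lemma integrable_sq_gaussianReal (μ : ℝ) (v : ℝ≥0) :
    Integrable (fun z ↦ z ^ 2) (gaussianReal μ v) :=
  (memLp_id_gaussianReal 2).integrable_sq

variable {v w : ℝ≥0} {s : ℝ}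

lemma gaussianPDFReal_zero_mul_exp_neg_mul_sq (hv : v ≠ 0) (hw : w ≠ 0)
    (h : (w : ℝ)⁻¹ = (v : ℝ)⁻¹ + 2 * s) (z : ℝ) :
    gaussianPDFReal 0 v z * exp (-s * z ^ 2) = √(w / v) * gaussianPDFReal 0 w z := by
  have exponent : -z ^ 2 / (2 * w) = -z ^ 2 / (2 * v) + -s * z ^ 2 := by
    linear_combination -z ^ 2 / 2 * h
  simp only [gaussianPDFReal, sub_zero]
  rw [exponent, exp_add, sqrt_div w.coe_nonneg, sqrt_mul two_pi_pos.le, sqrt_mul two_pi_pos.le]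
  field_simp

lemma gaussianReal_zero_withDensity_exp_neg_mul_sq (hv : v ≠ 0) (hw : w ≠ 0)
    (h : (w : ℝ)⁻¹ = (v : ℝ)⁻¹ + 2 * s) :
    (gaussianReal 0 v).withDensity (fun z ↦ ENNReal.ofReal (exp (-s * z ^ 2)))
      = ENNReal.ofReal √(w / v) • gaussianReal 0 w := by
  rw [gaussianReal_of_var_ne_zero _ hv, gaussianReal_of_var_ne_zero _ hw,
    ← withDensity_mul _ (measurable_gaussianPDF _ _) (by fun_prop),
    ← withDensity_smul _ (measurable_gaussianPDF _ _)]
  congr 1 with z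
  simp only [Pi.mul_apply, Pi.smul_apply, smul_eq_mul, gaussianPDF]
  rw [← ENNReal.ofReal_mul (gaussianPDFReal_nonneg _ _ _), ← ENNReal.ofReal_mul (sqrt_nonneg _),
    gaussianPDFReal_zero_mul_exp_neg_mul_sq hv hw h]

lemma integrable_mul_exp_neg_mul_sq_gaussianReal (hv : v ≠ 0) (hw : w ≠ 0)
    (h : (w : ℝ)⁻¹ = (v : ℝ)⁻¹ + 2 * s) {F : ℝ → ℝ} (hF : Integrable F (gaussianReal 0 w)) :
    Integrable (fun z ↦ F z * exp (-s * z ^ 2)) (gaussianReal 0 v) := by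
  have tilted := hF.smul_measure (c := ENNReal.ofReal √(w / v)) ENNReal.ofReal_ne_top
  rw [← gaussianReal_zero_withDensity_exp_neg_mul_sq hv hw h,
    integrable_withDensity_iff_integrable_smul' (by fun_prop) (by simp)] at tilted
  simpa [ENNReal.toReal_ofReal, exp_nonneg, mul_comm] using tilted

lemma integral_mul_exp_neg_mul_sq_gaussianReal (hv : v ≠ 0) (hw : w ≠ 0)
    (h : (w : ℝ)⁻¹ = (v : ℝ)⁻¹ + 2 * s) (F : ℝ → ℝ) :
    ∫ z, F z * exp (-s * z ^ 2) ∂gaussianReal 0 v = √(w / v) * ∫ z, F z ∂gaussianReal 0 w := by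
  have tilted := integral_withDensity_eq_integral_toReal_smul (μ := gaussianReal 0 v)
    (f := fun z ↦ ENNReal.ofReal (exp (-s * z ^ 2))) (by fun_prop) (by simp) F
  rw [gaussianReal_zero_withDensity_exp_neg_mul_sq hv hw h, integral_smul_measure,
    ENNReal.toReal_ofReal (sqrt_nonneg _), smul_eq_mul] at tilted
  simpa [ENNReal.toReal_ofReal, exp_nonneg, mul_comm] using tilted.symm

lemma exists_nnreal_coe_eq_inv {x : ℝ} (hx : 0 < x) : ∃ w : ℝ≥0, w ≠ 0 ∧ (w : ℝ) = x⁻¹ :=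
  ⟨x⁻¹.toNNReal, by simpa using hx, coe_toNNReal _ (by positivity)⟩

lemma integrable_sq_mul_exp_neg_mul_sq_gaussianReal (hs : 0 < 1 + 2 * s) :
    Integrable (fun z ↦ z ^ 2 * exp (-s * z ^ 2)) (gaussianReal 0 1) := by
  obtain ⟨w, hw, hw_eq⟩ := exists_nnreal_coe_eq_inv hs
  exact integrable_mul_exp_neg_mul_sq_gaussianReal one_ne_zero hw (by simp [hw_eq])
    (integrable_sq_gaussianReal 0 w)

lemma integral_sq_mul_exp_neg_mul_sq_gaussianReal (hs : 0 < 1 + 2 * s) :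
    ∫ z, z ^ 2 * exp (-s * z ^ 2) ∂gaussianReal 0 1 = (1 + 2 * s) ^ (-(3 / 2 : ℝ)) := by
  obtain ⟨w, hw, hw_eq⟩ := exists_nnreal_coe_eq_inv hs
  rw [integral_mul_exp_neg_mul_sq_gaussianReal one_ne_zero hw (by simp [hw_eq]),
    integral_sq_gaussianReal, hw_eq, NNReal.coe_one, div_one, sqrt_eq_rpow, ← rpow_neg_one,
    ← rpow_mul hs.le, ← rpow_add hs]
  norm_num

end GaussianTilt

theorem stmt7_general {a b T : ℝ} (hab : a ≠ 0 ∨ b ≠ 0) (hT : 0 < 1 + 2 * (T * b)) :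
    ∫ t in (0 : ℝ)..T, exp (-t * a) * (1 + 2 * (t * b)) ^ (-(3 / 2 : ℝ))
      = ∫ z, z ^ 2 * (1 - exp (-T * (a + b * z ^ 2))) / (a + b * z ^ 2) ∂gaussianReal 0 1 := by
  have factor (t z : ℝ) : z ^ 2 * exp (-t * (a + b * z ^ 2))
      = exp (-t * a) * (z ^ 2 * exp (-(t * b) * z ^ 2)) := by
    rw [mul_left_comm, ← exp_add]
    ring_nf
  have denom_ne_zero : ∀ᵐ z ∂gaussianReal 0 1, a + b * z ^ 2 ≠ 0 := by
    have := nullSingletonClass_gaussianReal (μ := 0) one_ne_zero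
    exact ae_add_mul_sq_ne_zero hab
  rw [integral_mul_one_sub_exp_neg_mul_div (by fun_prop) denom_ne_zero
    (integrable_sq_gaussianReal 0 1)
    (by simpa only [factor] using
      (integrable_sq_mul_exp_neg_mul_sq_gaussianReal hT).const_mul (exp (-T * a)))]
  refine intervalIntegral.integral_congr fun t ht ↦ ?_
  have ht_pos : 0 < 1 + 2 * (t * b) := by
    rcases Set.mem_uIcc.1 ht with ⟨h₀, h₁⟩ | ⟨h₀, h₁⟩ <;> rcases le_total 0 b with hb | hb <;>
      nlinarith
  simp only [factor, integral_const_mul, integral_sq_mul_exp_neg_mul_sq_gaussianReal ht_pos]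

/-- Theorem 2.2 / Proposition EC.2(e), integral identity.
For `m ≥ 1`, `λ ∈ [0,1]` and `T ≥ 0`:
`∫₀^T e^{−tm(1−λ)}(1 + 2tmλ)^{−3/2} dt
  = E_{Z∼N(0,1)}[Z²(1 − e^{−T(m(1−λ)+mλZ²)})/(m(1−λ)+mλZ²)]`. -/
theorem stmt7 (m : ℕ) (hm : 1 ≤ m) (l : ℝ) (hl : l ∈ Set.Icc (0 : ℝ) 1)
    (T : ℝ) (hT : 0 ≤ T) :
    (∫ t in (0 : ℝ)..T,
        Real.exp (-t * m * (1 - l)) * (1 + 2 * t * m * l) ^ (-(3 / 2 : ℝ)))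
      = ∫ z, z ^ 2 * (1 - Real.exp (-T * (m * (1 - l) + m * l * z ^ 2)))
            / (m * (1 - l) + m * l * z ^ 2) ∂(gaussianReal 0 1) := by
  have rates_ne_zero : (m : ℝ) * (1 - l) ≠ 0 ∨ (m : ℝ) * l ≠ 0 := by
    by_contra! h
    have : (1 : ℝ) ≤ m := by exact_mod_cast hm
    linarith
  have := hl.1
  simpa only [mul_assoc] using stmt7_general rates_ne_zero (T := T) (by positivity)
end

section
/- Let n ≥ m ≥ 1 and let A ∈ S^{nm}_+ be a real symmetric positive semidefinite matrix. Let μ be the Haar probability measure on the real orthogonal group O(n) ⊂ ℝ^{n×n}, and for g ∈ O(n) let Q(g) ∈ ℝ^{n×m} denote the matrix consisting of the first m columns of g (so Q(g)^⊤Q(g) = I_m). Then ∫_{O(n)} vec(Q(g))^⊤ A vec(Q(g)) dμ(g) ≤ sup{ vec(U)^⊤ A vec(U) : U ∈ ℝ^{n×m}, U^⊤U = I_m } ≤ nm · ∫_{O(n)} vec(Q(g))^⊤ A vec(Q(g)) dμ(g). -/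
open MeasureTheory Matrix

noncomputable instance {a b : Type*} : MeasurableSpace (Matrix a b ℝ) :=
  inferInstanceAs (MeasurableSpace (a → b → ℝ))

/-- `vec(U)`: stacking the columns of `U`, indexed by (column, row) pairs. -/
def vecM {n m : ℕ} (U : Matrix (Fin n) (Fin m) ℝ) : Fin m × Fin n → ℝ :=
  fun p => U p.2 p.1

/-- The first `m` columns of an `n × n` matrix (`m ≤ n`). -/
def firstCols {n m : ℕ} (hmn : m ≤ n) (g : Matrix (Fin n) (Fin n) ℝ) :
    Matrix (Fin n) (Fin m) ℝ :=
  Matrix.of fun p i => g p (Fin.castLE hmn i)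

/-!
The two bounds are compared through `tr A`. If `μ` is invariant under left multiplication by signed
permutation matrices, flipping the sign of one row kills the mixed moments `E[g_pi g_qj]`, `p ≠ q`,
and swapping rows makes `E[g_pi g_pj]` independent of `p`; since the columns of `g` are orthonormal,
`q = vec(Q(g))` is isotropic, `n E[q qᵀ] = I`, and so `n E[qᵀ A q] = tr A`.
On the other hand `vec(U)ᵀ A vec(U) ≤ tr A · ‖vec U‖² = m tr A` for every semi-orthogonal `U`.
-/

section Isotropic

variable {Ω α : Type*} [MeasurableSpace Ω] {μ : Measure Ω} [Fintype α] {X : Ω → α → ℝ}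

lemma dotProduct_mulVec_eq_sum_sum (A : Matrix α α ℝ) (u : α → ℝ) :
    u ⬝ᵥ A *ᵥ u = ∑ a, ∑ b, A a b * (u a * u b) := by
  simp only [dotProduct, mulVec, Finset.mul_sum, mul_left_comm]

lemma integrable_dotProduct_mulVec (A : Matrix α α ℝ)
    (hX : ∀ a b, Integrable (fun ω => X ω a * X ω b) μ) :
    Integrable (fun ω => X ω ⬝ᵥ A *ᵥ X ω) μ := by
  simp_rw [dotProduct_mulVec_eq_sum_sum]
  exact integrable_finsetSum _ fun a _ => integrable_finsetSum _ fun b _ => (hX a b).const_mul _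

lemma integral_dotProduct_mulVec (A : Matrix α α ℝ)
    (hX : ∀ a b, Integrable (fun ω => X ω a * X ω b) μ) :
    ∫ ω, X ω ⬝ᵥ A *ᵥ X ω ∂μ = ∑ a, ∑ b, A a b * ∫ ω, X ω a * X ω b ∂μ := by
  have hAX (a b : α) : Integrable (fun ω => A a b * (X ω a * X ω b)) μ := (hX a b).const_mul _
  simp_rw [dotProduct_mulVec_eq_sum_sum]
  rw [integral_finsetSum _ fun a _ => integrable_finsetSum _ fun b _ => hAX a b]
  simp_rw [integral_finsetSum _ fun b _ => hAX _ b, integral_const_mul]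

lemma mul_integral_dotProduct_mulVec_eq_trace [DecidableEq α] (A : Matrix α α ℝ) {s : ℝ}
    (hX : ∀ a b, Integrable (fun ω => X ω a * X ω b) μ)
    (hiso : ∀ a b, s * ∫ ω, X ω a * X ω b ∂μ = if a = b then 1 else 0) :
    s * ∫ ω, X ω ⬝ᵥ A *ᵥ X ω ∂μ = A.trace := by
  simp only [integral_dotProduct_mulVec A hX, Finset.mul_sum, mul_left_comm s, hiso, mul_ite,
    mul_one, mul_zero, Finset.sum_ite_eq, Finset.mem_univ, if_true, trace, diag]

end Isotropic

section Stiefel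

variable {ι κ : Type*} [Fintype ι] [Fintype κ]

lemma dotProduct_mulVec_le_trace_mul {A : Matrix ι ι ℝ} (hA : A.PosSemidef) (u : ι → ℝ) :
    u ⬝ᵥ A *ᵥ u ≤ A.trace * (u ⬝ᵥ u) := by
  classical
  obtain ⟨B, rfl⟩ : ∃ B : Matrix ι ι ℝ, A = Bᵀ * B := by
    open scoped MatrixOrder in
    exact CStarAlgebra.nonneg_iff_eq_star_mul_self.1 hA.nonneg
  have cauchy_schwarz (k : ι) : (B *ᵥ u) k * (B *ᵥ u) k ≤ (B k ⬝ᵥ B k) * (u ⬝ᵥ u) := by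
    simpa only [mulVec, dotProduct, pow_two] using
      Finset.sum_mul_sq_le_sq_mul_sq Finset.univ (B k) u
  calc u ⬝ᵥ (Bᵀ * B) *ᵥ u = B *ᵥ u ⬝ᵥ B *ᵥ u := by
        rw [← mulVec_mulVec, dotProduct_mulVec, vecMul_transpose]
    _ ≤ ∑ k, (B k ⬝ᵥ B k) * (u ⬝ᵥ u) := Finset.sum_le_sum fun k _ => cauchy_schwarz k
    _ = (Bᵀ * B).trace * (u ⬝ᵥ u) := by
        rw [← Finset.sum_mul, trace_mul_comm]
        rfl

variable [DecidableEq κ]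

/-- The values of the quadratic form `U ↦ vec(U)ᵀ A vec(U)` on the Stiefel manifold of
semi-orthogonal matrices. -/
def stiefelValues (A : Matrix (κ × ι) (κ × ι) ℝ) : Set ℝ :=
  {x | ∃ U : Matrix ι κ ℝ, Uᵀ * U = 1 ∧ x = U.vec ⬝ᵥ A *ᵥ U.vec}

lemma vec_dotProduct_vec_of_transpose_mul_self {U : Matrix ι κ ℝ} (hU : Uᵀ * U = 1) :
    U.vec ⬝ᵥ U.vec = Fintype.card κ := by
  rw [vec_dotProduct_vec, hU, trace_one]

lemma trace_mul_card_mem_upperBounds_stiefelValues {A : Matrix (κ × ι) (κ × ι) ℝ}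
    (hA : A.PosSemidef) : A.trace * Fintype.card κ ∈ upperBounds (stiefelValues A) := by
  rintro x ⟨U, hU, rfl⟩
  rw [← vec_dotProduct_vec_of_transpose_mul_self hU]
  exact dotProduct_mulVec_le_trace_mul hA U.vec

end Stiefel

lemma integral_comp_eq_of_map_eq {α E : Type*} [MeasurableSpace α] [NormedAddCommGroup E]
    [NormedSpace ℝ E] {μ : Measure α} {T : α → α} (hT : μ.map T = μ) {f : α → E}
    (hf : AEStronglyMeasurable f μ) : ∫ a, f (T a) ∂μ = ∫ a, f a ∂μ := by
  rcases eq_zero_or_neZero μ with rfl | hμ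
  · simp only [integral_zero_measure]
  -- `μ.map T` has the junk value `0` when `T` is not a.e. measurable, so `hT` forces measurability.
  have hT_meas : AEMeasurable T μ := aemeasurable_of_map_neZero (by rwa [hT])
  rw [← integral_map hT_meas (by rwa [hT]), hT]

section OrthogonalGroup

variable {ι κ : Type*} [Fintype ι] [DecidableEq ι]

lemma sum_orthogonal_mul_orthogonal (g : orthogonalGroup ι ℝ) (i j : ι) :
    ∑ p, (g : Matrix ι ι ℝ) p i * (g : Matrix ι ι ℝ) p j = if i = j then 1 else 0 :=
  congr_fun₂ ((mem_orthogonalGroup_iff' ι ℝ).1 g.2) i j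

lemma transpose_submatrix_mul_submatrix_orthogonal [DecidableEq κ] (c : κ ↪ ι)
    (g : orthogonalGroup ι ℝ) :
    ((g : Matrix ι ι ℝ).submatrix id c)ᵀ * (g : Matrix ι ι ℝ).submatrix id c = 1 := by
  rw [transpose_submatrix, ← submatrix_mul _ _ c id c Function.bijective_id,
    (mem_orthogonalGroup_iff' ι ℝ).1 g.2, submatrix_one_embedding]

lemma submatrix_orthogonal_mem_stiefelValues [Fintype κ] [DecidableEq κ] (c : κ ↪ ι)
    (A : Matrix (κ × ι) (κ × ι) ℝ) (g : orthogonalGroup ι ℝ) :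
    ((g : Matrix ι ι ℝ).submatrix id c).vec ⬝ᵥ A *ᵥ ((g : Matrix ι ι ℝ).submatrix id c).vec
      ∈ stiefelValues A :=
  ⟨_, transpose_submatrix_mul_submatrix_orthogonal c g, rfl⟩

lemma measurable_orthogonal_apply (p i : ι) :
    Measurable fun g : orthogonalGroup ι ℝ => (g : Matrix ι ι ℝ) p i :=
  (measurable_pi_apply (X := fun _ => ℝ) i).comp
    ((measurable_pi_apply (X := fun _ => ι → ℝ) p).comp measurable_subtype_coe)

lemma measurable_orthogonal_mul_orthogonal (p q i j : ι) :
    Measurable fun g : orthogonalGroup ι ℝ =>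
      (g : Matrix ι ι ℝ) p i * (g : Matrix ι ι ℝ) q j :=
  (measurable_orthogonal_apply p i).mul (measurable_orthogonal_apply q j)

lemma integrable_orthogonal_mul_orthogonal (μ : Measure (orthogonalGroup ι ℝ)) [IsFiniteMeasure μ]
    (p q i j : ι) :
    Integrable (fun g : orthogonalGroup ι ℝ =>
      (g : Matrix ι ι ℝ) p i * (g : Matrix ι ι ℝ) q j) μ := by
  refine .of_bound (measurable_orthogonal_mul_orthogonal p q i j).aestronglyMeasurable 1
    (.of_forall fun g => ?_)
  rw [norm_mul]
  exact mul_le_one₀ (entry_norm_bound_of_unitary g.2 p i) (norm_nonneg _)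
    (entry_norm_bound_of_unitary g.2 q j)

/-- The reflection in the coordinate hyperplane orthogonal to the `p`-th basis vector. -/
def signFlip (p : ι) : orthogonalGroup ι ℝ :=
  ⟨diagonal fun k => if k = p then -1 else 1, by
    rw [mem_orthogonalGroup_iff, diagonal_transpose, diagonal_mul_diagonal, ← diagonal_one]
    congr 1 with k
    split_ifs <;> norm_num⟩

/-- The orthogonal transformation exchanging the `p`-th and `q`-th basis vectors. -/
def rowSwap (p q : ι) : orthogonalGroup ι ℝ :=
  ⟨Matrix.swap ℝ p q, by
    rw [mem_orthogonalGroup_iff, transpose_swap, swap_mul_self]⟩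

variable (ι) in
/-- The group of signed permutation matrices, generated by the coordinate reflections and the
transpositions of basis vectors. -/
def hyperoctahedralGroup : Subgroup (orthogonalGroup ι ℝ) :=
  Subgroup.closure (Set.range signFlip ∪ Set.range fun pq : ι × ι => rowSwap pq.1 pq.2)

lemma signFlip_mem_hyperoctahedralGroup (p : ι) : signFlip p ∈ hyperoctahedralGroup ι :=
  Subgroup.subset_closure (.inl ⟨p, rfl⟩)

lemma rowSwap_mem_hyperoctahedralGroup (p q : ι) : rowSwap p q ∈ hyperoctahedralGroup ι :=
  Subgroup.subset_closure (.inr ⟨(p, q), rfl⟩)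

lemma signFlip_mul_apply_self (p i : ι) (g : orthogonalGroup ι ℝ) :
    (signFlip p * g : Matrix ι ι ℝ) p i = -(g : Matrix ι ι ℝ) p i := by
  simp [signFlip]

lemma signFlip_mul_apply_of_ne {p q : ι} (hqp : q ≠ p) (i : ι) (g : orthogonalGroup ι ℝ) :
    (signFlip p * g : Matrix ι ι ℝ) q i = (g : Matrix ι ι ℝ) q i := by
  simp [signFlip, hqp]

lemma rowSwap_mul_apply_left (p q i : ι) (g : orthogonalGroup ι ℝ) :
    (rowSwap p q * g : Matrix ι ι ℝ) p i = (g : Matrix ι ι ℝ) q i :=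
  swap_mul_apply_left p q i _

variable {μ : Measure (orthogonalGroup ι ℝ)}

lemma integral_orthogonal_mul_orthogonal_eq_zero {p q : ι}
    (hflip : μ.map (signFlip p * ·) = μ) (hqp : q ≠ p) (i j : ι) :
    ∫ g, (g : Matrix ι ι ℝ) p i * (g : Matrix ι ι ℝ) q j ∂μ = 0 := by
  have h := integral_comp_eq_of_map_eq hflip
    (measurable_orthogonal_mul_orthogonal p q i j).aestronglyMeasurable
  simp only [Submonoid.coe_mul, signFlip_mul_apply_self, signFlip_mul_apply_of_ne hqp, neg_mul,
    integral_neg] at h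
  linarith

lemma integral_orthogonal_mul_orthogonal_row_eq {p q : ι}
    (hswap : μ.map (rowSwap p q * ·) = μ) (i j : ι) :
    ∫ g, (g : Matrix ι ι ℝ) q i * (g : Matrix ι ι ℝ) q j ∂μ =
      ∫ g, (g : Matrix ι ι ℝ) p i * (g : Matrix ι ι ℝ) p j ∂μ := by
  simpa only [Submonoid.coe_mul, rowSwap_mul_apply_left] using
    integral_comp_eq_of_map_eq hswap
      (measurable_orthogonal_mul_orthogonal p p i j).aestronglyMeasurable

variable [IsProbabilityMeasure μ]

lemma sum_integral_orthogonal_mul_orthogonal (i j : ι) :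
    ∑ p, ∫ g, (g : Matrix ι ι ℝ) p i * (g : Matrix ι ι ℝ) p j ∂μ = if i = j then 1 else 0 := by
  rw [← integral_finsetSum _ fun p _ => integrable_orthogonal_mul_orthogonal μ p p i j]
  simp_rw [sum_orthogonal_mul_orthogonal]
  simp

lemma card_mul_integral_orthogonal_mul_orthogonal
    (hinv : ∀ h ∈ hyperoctahedralGroup ι, μ.map (h * ·) = μ) (p q i j : ι) :
    Fintype.card ι * ∫ g, (g : Matrix ι ι ℝ) p i * (g : Matrix ι ι ℝ) q j ∂μ =
      if i = j ∧ p = q then 1 else 0 := by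
  rcases eq_or_ne q p with rfl | hqp
  · have row_eq (r : ι) := integral_orthogonal_mul_orthogonal_row_eq
      (hinv _ (rowSwap_mem_hyperoctahedralGroup q r)) i j
    simp only [and_true, ← sum_integral_orthogonal_mul_orthogonal (μ := μ), row_eq,
      Finset.sum_const, Finset.card_univ, nsmul_eq_mul]
  · rw [integral_orthogonal_mul_orthogonal_eq_zero
      (hinv _ (signFlip_mem_hyperoctahedralGroup p)) hqp, mul_zero, if_neg fun h => hqp h.2.symm]

lemma card_mul_integral_vec_submatrix_eq_trace [Fintype κ] (c : κ ↪ ι)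
    (A : Matrix (κ × ι) (κ × ι) ℝ)
    (hinv : ∀ h ∈ hyperoctahedralGroup ι, μ.map (h * ·) = μ) :
    Fintype.card ι * ∫ g, ((g : Matrix ι ι ℝ).submatrix id c).vec ⬝ᵥ
      A *ᵥ ((g : Matrix ι ι ℝ).submatrix id c).vec ∂μ = A.trace := by
  classical
  refine mul_integral_dotProduct_mulVec_eq_trace A
    (fun a b => integrable_orthogonal_mul_orthogonal μ a.2 b.2 (c a.1) (c b.1)) fun a b => ?_
  simpa only [Prod.ext_iff, c.injective.eq_iff, vec, submatrix_apply, id_eq] using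
    card_mul_integral_orthogonal_mul_orthogonal hinv a.2 b.2 (c a.1) (c b.1)

theorem stmt10_general [Fintype κ] [DecidableEq κ] (c : κ ↪ ι) {A : Matrix (κ × ι) (κ × ι) ℝ}
    (hA : A.PosSemidef) (hinv : ∀ h ∈ hyperoctahedralGroup ι, μ.map (h * ·) = μ) :
    (∫ g, ((g : Matrix ι ι ℝ).submatrix id c).vec ⬝ᵥ
      A *ᵥ ((g : Matrix ι ι ℝ).submatrix id c).vec ∂μ) ≤ sSup (stiefelValues A) ∧
    sSup (stiefelValues A) ≤ (Fintype.card ι : ℝ) * Fintype.card κ *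
      ∫ g, ((g : Matrix ι ι ℝ).submatrix id c).vec ⬝ᵥ
        A *ᵥ ((g : Matrix ι ι ℝ).submatrix id c).vec ∂μ := by
  have upper_bound := trace_mul_card_mem_upperBounds_stiefelValues hA
  have value_mem := submatrix_orthogonal_mem_stiefelValues c A
  constructor
  · have form_integrable := integrable_dotProduct_mulVec A fun a b =>
      integrable_orthogonal_mul_orthogonal μ a.2 b.2 (c a.1) (c b.1)
    calc _ ≤ ∫ _, sSup (stiefelValues A) ∂μ :=
          integral_mono form_integrable (integrable_const _)
            fun g => le_csSup ⟨_, upper_bound⟩ (value_mem g)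
      _ = sSup (stiefelValues A) := by simp only [integral_const, probReal_univ, one_smul]
  · rw [mul_right_comm, card_mul_integral_vec_submatrix_eq_trace c A hinv]
    exact csSup_le ⟨_, value_mem 1⟩ upper_bound

end OrthogonalGroup

/-- Proposition 2.2, uniform/Haar sampling bound.
For `A ⪰ 0` and `μ` the Haar probability measure on `O(n)` (formalized as a
left-translation-invariant probability measure), with `Q(g)` the first `m`
columns of `g`:
`∫ vec(Q(g))ᵀ A vec(Q(g)) dμ ≤ sup {vec(U)ᵀ A vec(U) : UᵀU = Iₘ}
  ≤ nm ∫ vec(Q(g))ᵀ A vec(Q(g)) dμ`. -/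
theorem stmt10 {n m : ℕ} (hm : 1 ≤ m) (hmn : m ≤ n)
    (A : Matrix (Fin m × Fin n) (Fin m × Fin n) ℝ) (hA : A.PosSemidef)
    (μ : Measure (Matrix.orthogonalGroup (Fin n) ℝ)) [IsProbabilityMeasure μ]
    (hinv : ∀ h : Matrix.orthogonalGroup (Fin n) ℝ,
      Measure.map (fun g => h * g) μ = μ) :
    (∫ g, vecM (firstCols hmn (g : Matrix (Fin n) (Fin n) ℝ))
        ⬝ᵥ A.mulVec (vecM (firstCols hmn (g : Matrix (Fin n) (Fin n) ℝ))) ∂μ)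
      ≤ sSup {x : ℝ | ∃ U : Matrix (Fin n) (Fin m) ℝ,
          Uᵀ * U = 1 ∧ x = vecM U ⬝ᵥ A.mulVec (vecM U)} ∧
    sSup {x : ℝ | ∃ U : Matrix (Fin n) (Fin m) ℝ,
          Uᵀ * U = 1 ∧ x = vecM U ⬝ᵥ A.mulVec (vecM U)}
      ≤ (n : ℝ) * m
          * ∫ g, vecM (firstCols hmn (g : Matrix (Fin n) (Fin n) ℝ))
              ⬝ᵥ A.mulVec (vecM (firstCols hmn (g : Matrix (Fin n) (Fin n) ℝ))) ∂μ := by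
  have signed_perm_bound := stmt10_general (Fin.castLEEmb hmn) hA fun h _ => hinv h
  rw [Fintype.card_fin, Fintype.card_fin] at signed_perm_bound
  exact signed_perm_bound
end

section
/- Let n, m ≥ 1, let Ω ⊆ [n]×[m], and let A ∈ ℝ^{n×m}. Consider two optimization problems with objective tr(Y). Problem (I): minimize tr(Y) over Y ∈ S^n with 0 ⪯ Y ⪯ I_n, X ∈ ℝ^{n×m}, and W ∈ S^{nm}_+ whose coordinates are indexed by pairs (i,j) ∈ [n]×[m] with m×m blocks W^{(i,k)} given by (W^{(i,k)})_{j,ℓ} = W_{(i,j),(k,ℓ)}, subject to: A_{i,j}A_{k,ℓ} − A_{k,ℓ}X_{i,j} − A_{i,j}X_{k,ℓ} + (W^{(i,k)})_{j,ℓ} = 0 for all (i,j),(k,ℓ) ∈ Ω×Ω; X_{i,j} = A_{i,j} for all (i,j) ∈ Ω; W ⪰ vec(X^⊤)vec(X^⊤)^⊤; and the block matrix [[Σ_{i∈[n]} W^{(i,i)}, X^⊤],[X, Y]] ⪰ 0. Problem (II): minimize tr(Y) over Y ∈ S^n with 0 ⪯ Y ⪯ I_n, X ∈ ℝ^{n×m},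 and S^1,…,S^n ∈ S^m_+, subject to: A_{i,j}A_{i,ℓ} − A_{i,ℓ}X_{i,j} − A_{i,j}X_{i,ℓ} + (S^i)_{j,ℓ} = 0 for all (i,j),(i,ℓ) ∈ Ω×Ω; X_{i,j} = A_{i,j} for all (i,j) ∈ Ω; S^i ⪰ X_{i,·}X_{i,·}^⊤ for every i ∈ [n]; and [[Σ_{i∈[n]} S^i, X^⊤],[X, Y]] ⪰ 0, where X_{i,·} ∈ ℝ^m denotes the i-th row of X as a column vector. Then the optimal values (infima) of Problems (I) and (II) are equal. -/
open Matrix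

/-!
The two problems have the same feasible pairs `(X, Y)`. The diagonal blocks of a feasible `W` are
feasible `Sⁱ`. Conversely, write `x` for the vector of entries of `X` and replace the diagonal
blocks of `x xᵀ` by the `Sⁱ`: the resulting `W` exceeds `x xᵀ` by the block diagonal matrix of the
positive semidefinite `Sⁱ - Xᵢ Xᵢᵀ`. Since `X` agrees with `A` on the observed entries, the
quadratic constraint there only says `W p q = x p * x q`, which off the diagonal blocks holds by
construction.
-/

section Blocks

variable {ι κ R : Type*}

/-- The diagonal block `W⁽ⁱⁱ⁾` of a matrix indexed by pairs, the first component of a pair naming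
the block. (Mathlib's `Matrix.blockDiag` uses the second component.) -/
def diagBlock (W : Matrix (ι × κ) (ι × κ) R) (i : ι) : Matrix κ κ R :=
  W.submatrix (Prod.mk i) (Prod.mk i)

/-- The matrix with diagonal blocks `S i` that agrees with `M` off the diagonal blocks;
with `M = x xᵀ` it completes the `Sⁱ` to a feasible `W`. -/
def replaceDiagBlocks [DecidableEq ι] (M : Matrix (ι × κ) (ι × κ) R) (S : ι → Matrix κ κ R) :
    Matrix (ι × κ) (ι × κ) R :=
  Matrix.of fun p q => if p.1 = q.1 then S p.1 p.2 q.2 else M p q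

lemma sum_diagBlock [Fintype ι] [AddCommMonoid R] (W : Matrix (ι × κ) (ι × κ) R) :
    ∑ i, diagBlock W i = Matrix.of fun j l => ∑ i, W (i, j) (i, l) := by
  ext j l
  simp [Matrix.sum_apply, diagBlock]

lemma diagBlock_replaceDiagBlocks [DecidableEq ι] (M : Matrix (ι × κ) (ι × κ) R)
    (S : ι → Matrix κ κ R) : diagBlock (replaceDiagBlocks M S) = S := by
  ext i j l
  simp [diagBlock, replaceDiagBlocks]

lemma replaceDiagBlocks_apply_eq_of_imp [DecidableEq ι] {M : Matrix (ι × κ) (ι × κ) R}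
    {S : ι → Matrix κ κ R} {p q : ι × κ} (h : p.1 = q.1 → S p.1 p.2 q.2 = M p q) :
    replaceDiagBlocks M S p q = M p q :=
  ite_eq_right_iff.2 h

lemma replaceDiagBlocks_sub_self [DecidableEq ι] [AddGroup R] (M : Matrix (ι × κ) (ι × κ) R)
    (S : ι → Matrix κ κ R) :
    replaceDiagBlocks M S - M =
      (blockDiagonal fun i => S i - diagBlock M i).submatrix Prod.swap Prod.swap := by
  ext ⟨i, j⟩ ⟨k, l⟩
  by_cases hik : i = k
  · subst hik
    simp [replaceDiagBlocks, diagBlock]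
  · simp [replaceDiagBlocks, blockDiagonal_apply, hik]

lemma dotProduct_blockDiagonal_mulVec {κ' : Type*} [NonUnitalNonAssocSemiring R] [Fintype ι]
    [DecidableEq ι] [Fintype κ] [Fintype κ'] (T : ι → Matrix κ κ' R) (x : κ × ι → R)
    (y : κ' × ι → R) :
    x ⬝ᵥ (blockDiagonal T *ᵥ y) = ∑ i, (fun j => x (j, i)) ⬝ᵥ (T i *ᵥ fun j => y (j, i)) := by
  simp only [dotProduct, mulVec, Fintype.sum_prod_type_right, blockDiagonal_apply, ite_mul,
    zero_mul, Finset.sum_ite_irrel, Finset.sum_const_zero, Finset.sum_ite_eq, Finset.mem_univ,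
    if_true]

end Blocks

section PosSemidef

variable {ι κ R : Type*} [Ring R] [PartialOrder R] [StarRing R]

lemma posSemidef_diagBlock {W : Matrix (ι × κ) (ι × κ) R} (hW : W.PosSemidef) (i : ι) :
    (diagBlock W i).PosSemidef :=
  hW.submatrix (Prod.mk i)

variable [AddLeftMono R] [Finite ι] [DecidableEq ι] [Finite κ]

lemma posSemidef_blockDiagonal {T : ι → Matrix κ κ R} (hT : ∀ i, (T i).PosSemidef) :
    (blockDiagonal T).PosSemidef := by
  have := Fintype.ofFinite ι
  have := Fintype.ofFinite κ
  have hherm : (blockDiagonal T).IsHermitian := by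
    rw [IsHermitian, blockDiagonal_conjTranspose, funext fun i => (hT i).isHermitian.eq]
  refine .of_dotProduct_mulVec_nonneg hherm fun x => ?_
  rw [dotProduct_blockDiagonal_mulVec]
  exact Finset.sum_nonneg fun i _ => (hT i).dotProduct_mulVec_nonneg _

lemma posSemidef_replaceDiagBlocks_sub {M : Matrix (ι × κ) (ι × κ) R} {S : ι → Matrix κ κ R}
    (hS : ∀ i, (S i - diagBlock M i).PosSemidef) : (replaceDiagBlocks M S - M).PosSemidef := by
  rw [replaceDiagBlocks_sub_self]
  exact (posSemidef_blockDiagonal hS).submatrix Prod.swap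

lemma posSemidef_replaceDiagBlocks {M : Matrix (ι × κ) (ι × κ) R} {S : ι → Matrix κ κ R}
    (hM : M.PosSemidef) (hS : ∀ i, (S i - diagBlock M i).PosSemidef) :
    (replaceDiagBlocks M S).PosSemidef := by
  simpa only [sub_add_cancel] using (posSemidef_replaceDiagBlocks_sub hS).add hM

end PosSemidef

lemma linearized_mul_eq_zero_iff {R : Type*} [CommRing R] {a b x y w : R} (hx : x = a)
    (hy : y = b) : a * b - b * x - a * y + w = 0 ↔ w = x * y := by
  subst hx hy
  rw [mul_comm y x, sub_self, zero_sub, neg_add_eq_zero, eq_comm]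

/-- Proposition EC.4, low-rank basis pursuit:
equivalence of the full and the compact Shor relaxations. -/
theorem stmt11 {n m : ℕ} (hn : 1 ≤ n) (hm : 1 ≤ m)
    (Obs : Set (Fin n × Fin m)) (A : Matrix (Fin n) (Fin m) ℝ) :
    sInf {x : EReal | ∃ (Y : Matrix (Fin n) (Fin n) ℝ)
        (X : Matrix (Fin n) (Fin m) ℝ)
        (W : Matrix (Fin n × Fin m) (Fin n × Fin m) ℝ),
        Y.PosSemidef ∧ ((1 : Matrix (Fin n) (Fin n) ℝ) - Y).PosSemidef ∧
        W.PosSemidef ∧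
        (∀ i j k l, (i, j) ∈ Obs → (k, l) ∈ Obs →
          A i j * A k l - A k l * X i j - A i j * X k l + W (i, j) (k, l) = 0) ∧
        (∀ i j, (i, j) ∈ Obs → X i j = A i j) ∧
        (W - Matrix.vecMulVec (fun p : Fin n × Fin m => X p.1 p.2)
              (fun p : Fin n × Fin m => X p.1 p.2)).PosSemidef ∧
        (Matrix.fromBlocks
            (Matrix.of fun j l : Fin m => ∑ i : Fin n, W (i, j) (i, l))
            Xᵀ X Y).PosSemidef ∧
        x = (Y.trace : ℝ)} =
      sInf {x : EReal | ∃ (Y : Matrix (Fin n) (Fin n) ℝ)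
        (X : Matrix (Fin n) (Fin m) ℝ)
        (S : Fin n → Matrix (Fin m) (Fin m) ℝ),
        Y.PosSemidef ∧ ((1 : Matrix (Fin n) (Fin n) ℝ) - Y).PosSemidef ∧
        (∀ i, (S i).PosSemidef) ∧
        (∀ i j l, (i, j) ∈ Obs → (i, l) ∈ Obs →
          A i j * A i l - A i l * X i j - A i j * X i l + S i j l = 0) ∧
        (∀ i j, (i, j) ∈ Obs → X i j = A i j) ∧
        (∀ i, (S i - Matrix.vecMulVec (fun j => X i j)
              (fun j => X i j)).PosSemidef) ∧
        (Matrix.fromBlocks (∑ i, S i) Xᵀ X Y).PosSemidef ∧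
        x = (Y.trace : ℝ)} := by
  congr 1
  ext c
  constructor
  · rintro ⟨Y, X, W, hY, hIY, hW, hquad, hobs, hWX, hblock, hc⟩
    rw [← sum_diagBlock] at hblock
    exact ⟨Y, X, diagBlock W, hY, hIY, posSemidef_diagBlock hW,
      fun i j l => hquad i j i l, hobs, posSemidef_diagBlock hWX, hblock, hc⟩
  · rintro ⟨Y, X, S, hY, hIY, -, hquad, hobs, hSX, hblock, hc⟩
    let x := fun p : Fin n × Fin m => X p.1 p.2
    let M := vecMulVec x x
    have hM : M.PosSemidef := posSemidef_vecMulVec_self_star x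
    refine ⟨Y, X, replaceDiagBlocks M S, hY, hIY, posSemidef_replaceDiagBlocks hM hSX, ?_, hobs,
      posSemidef_replaceDiagBlocks_sub hSX, ?_, hc⟩
    · intro i j k l hij hkl
      rw [linearized_mul_eq_zero_iff (hobs i j hij) (hobs k l hkl)]
      refine replaceDiagBlocks_apply_eq_of_imp fun hik => ?_
      obtain rfl : i = k := hik
      exact (linearized_mul_eq_zero_iff (hobs i j hij) (hobs i l hkl)).1 (hquad i j l hij hkl)
    · rwa [← sum_diagBlock, diagBlock_replaceDiagBlocks]
end

section
/- Let n, m ≥ 1, k ∈ ℕ, C ∈ S^n_+, H ∈ S^{nm}_+, D ∈ ℝ^{n×m}, and let (A_i, b_i)_{i∈I} be a finite family with A_i ∈ ℝ^{n×m}, b_i ∈ ℝ. Define v* as the infimum of ⟨C,Y⟩ + vec(X^⊤)^⊤ H vec(X^⊤) + ⟨D,X⟩ over pairs (X,Y) with Y ∈ S^n, Y² = Y, tr(Y) ≤ k, X ∈ ℝ^{n×m}, ⟨A_i,X⟩ ≤ b_i for all i ∈ I, and X = YX. Define v_rel as the infimum of ⟨C,Y⟩ + ⟨W_xx, H⟩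 + ⟨D,X⟩ over tuples (Y, X, W_xx, W_xy, W_yy) with Y ∈ S^n_+, Y ⪯ I_n, tr(Y) ≤ k; X ∈ ℝ^{n×m} with ⟨A_i,X⟩ ≤ b_i for all i; W_xx ∈ S^{nm}, W_yy ∈ S^{n²}, W_xy ∈ ℝ^{nm×n²}; the bordered block matrix [[1, vec(X^⊤)^⊤, vec(Y)^⊤],[vec(X^⊤), W_xx, W_xy],[vec(Y), W_xy^⊤, W_yy]] ⪰ 0; Σ_{i∈[n]} W_yy^{(i,i)} = Y; and Σ_{i∈[n]} W_xy^{(i,i)} = X^⊤. Then v_rel ≤ v*; more precisely, for every feasible (X,Y) of the first problem, setting W_xx = vec(X^⊤)vec(X^⊤)^⊤, W_xy = vec(X^⊤)vec(Y)^⊤, W_yy = vec(Y)vec(Y)^⊤ yields a feasible point of the second problem with the same objective value. -/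
open Matrix

/-- Frobenius inner product `⟨A,B⟩ = tr(AᵀB)`. -/
def frob {a b : Type*} [Fintype a] [Fintype b] (A B : Matrix a b ℝ) : ℝ :=
  (Aᵀ * B).trace

/-- `vec(Xᵀ)`: stacking the rows of `X`, indexed by (row, column) pairs. -/
def vecXt {n m : ℕ} (X : Matrix (Fin n) (Fin m) ℝ) : Fin n × Fin m → ℝ :=
  fun p => X p.1 p.2

/-- `vec(Y)`: stacking the columns of `Y`, indexed by (column, row) pairs. -/
def vecY {n : ℕ} (Y : Matrix (Fin n) (Fin n) ℝ) : Fin n × Fin n → ℝ :=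
  fun p => Y p.2 p.1

/-- The bordered matrix `[[1, vec(Xᵀ)ᵀ, vec(Y)ᵀ], [vec(Xᵀ), Wxx, Wxy], [vec(Y), Wxyᵀ, Wyy]]`. -/
def bordered {n m : ℕ} (X : Matrix (Fin n) (Fin m) ℝ) (Y : Matrix (Fin n) (Fin n) ℝ)
    (Wxx : Matrix (Fin n × Fin m) (Fin n × Fin m) ℝ)
    (Wxy : Matrix (Fin n × Fin m) (Fin n × Fin n) ℝ)
    (Wyy : Matrix (Fin n × Fin n) (Fin n × Fin n) ℝ) :
    Matrix (Unit ⊕ ((Fin n × Fin m) ⊕ (Fin n × Fin n)))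
      (Unit ⊕ ((Fin n × Fin m) ⊕ (Fin n × Fin n))) ℝ :=
  Matrix.fromBlocks
    (Matrix.of fun _ _ : Unit => (1 : ℝ))
    (Matrix.of fun (_ : Unit) q => Sum.elim (vecXt X) (vecY Y) q)
    (Matrix.of fun q (_ : Unit) => Sum.elim (vecXt X) (vecY Y) q)
    (Matrix.fromBlocks Wxx Wxy Wxyᵀ Wyy)

/-- Feasibility for the exact rank-constrained problem (3.1). -/
def FeasExact {n m : ℕ} (k : ℕ) {ι : Type*}
    (A : ι → Matrix (Fin n) (Fin m) ℝ) (b : ι → ℝ)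
    (X : Matrix (Fin n) (Fin m) ℝ) (Y : Matrix (Fin n) (Fin n) ℝ) : Prop :=
  Y.IsSymm ∧ Y * Y = Y ∧ Y.trace ≤ (k : ℝ) ∧
    (∀ i, frob (A i) X ≤ b i) ∧ X = Y * X

/-- Feasibility for the Shor relaxation (3.2). -/
def FeasRel {n m : ℕ} (k : ℕ) {ι : Type*}
    (A : ι → Matrix (Fin n) (Fin m) ℝ) (b : ι → ℝ)
    (Y : Matrix (Fin n) (Fin n) ℝ) (X : Matrix (Fin n) (Fin m) ℝ)
    (Wxx : Matrix (Fin n × Fin m) (Fin n × Fin m) ℝ)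
    (Wxy : Matrix (Fin n × Fin m) (Fin n × Fin n) ℝ)
    (Wyy : Matrix (Fin n × Fin n) (Fin n × Fin n) ℝ) : Prop :=
  Y.PosSemidef ∧ ((1 : Matrix (Fin n) (Fin n) ℝ) - Y).PosSemidef ∧
    Y.trace ≤ (k : ℝ) ∧ (∀ i, frob (A i) X ≤ b i) ∧
    Wxx.IsSymm ∧ Wyy.IsSymm ∧
    (bordered X Y Wxx Wxy Wyy).PosSemidef ∧
    (∀ p q : Fin n, (∑ i : Fin n, Wyy (i, p) (i, q)) = Y p q) ∧
    (∀ (j : Fin m) (q : Fin n), (∑ i : Fin n, Wxy (i, j) (i, q)) = X q j)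

/-!
If `Y` is an orthogonal projection, then so is `1 - Y`, and an orthogonal projection is positive
semidefinite, so `0 ⪯ Y ⪯ 1`. With the rank-one choice of `W`, the bordered matrix is `z zᵀ` for
`z = (1, vec Xᵀ, vec Y)`, and the sum of the diagonal blocks of `vec A (vec B)ᵀ` is `A Bᵀ`.
The two linear constraints of the relaxation thus read `Y Yᵀ = Y` and `Xᵀ Yᵀ = Xᵀ`, which are the
constraints `Y² = Y` and `Y X = X` of the exact problem.
-/

section RankOne

variable {l m n o R : Type*}

theorem isSymm_vecMulVec_self [CommMagma R] (v : n → R) : (vecMulVec v v).IsSymm :=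
  transpose_vecMulVec v v

theorem vecMulVec_sumElim_sumElim [Mul R] (u : l → R) (v : m → R) (w : n → R) (z : o → R) :
    vecMulVec (Sum.elim u v) (Sum.elim w z) =
      fromBlocks (vecMulVec u w) (vecMulVec u z) (vecMulVec v w) (vecMulVec v z) := by
  ext (_ | _) (_ | _) <;> rfl

theorem sum_vecMulVec_vec_diagonal_block [NonUnitalNonAssocSemiring R] [Fintype n]
    (A : Matrix l n R) (B : Matrix m n R) (p : l) (q : m) :
    ∑ i, vecMulVec A.vec B.vec (i, p) (i, q) = (A * Bᵀ) p q :=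
  rfl

theorem frob_vecMulVec [Fintype m] [Fintype n] (u : m → ℝ) (v : n → ℝ) (H : Matrix m n ℝ) :
    frob (vecMulVec u v) H = u ⬝ᵥ H *ᵥ v := by
  rw [frob, transpose_vecMulVec, vecMulVec_mul, trace_vecMulVec, dotProduct_mulVec,
    dotProduct_comm]

end RankOne

open scoped MatrixOrder ComplexOrder in
theorem posSemidef_of_isStarProjection {n 𝕜 : Type*} [Fintype n] [RCLike 𝕜]
    {P : Matrix n n 𝕜} (hP : IsStarProjection P) : P.PosSemidef :=
  nonneg_iff_posSemidef.mp hP.nonneg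

section Lifting

variable {n m : ℕ} (X : Matrix (Fin n) (Fin m) ℝ) (Y : Matrix (Fin n) (Fin n) ℝ)

theorem vecXt_eq_vec_transpose : vecXt X = Xᵀ.vec :=
  rfl

theorem vecY_eq_vec : vecY Y = Y.vec :=
  rfl

/-- The homogenized variable `z = (1, vec Xᵀ, vec Y)`, whose outer product `z zᵀ` the bordered
matrix of the relaxation replaces. -/
def homogenized : Unit ⊕ ((Fin n × Fin m) ⊕ (Fin n × Fin n)) → ℝ :=
  Sum.elim 1 (Sum.elim (vecXt X) (vecY Y))

theorem bordered_vecMulVec :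
    bordered X Y (vecMulVec (vecXt X) (vecXt X)) (vecMulVec (vecXt X) (vecY Y))
        (vecMulVec (vecY Y) (vecY Y)) =
      vecMulVec (homogenized X Y) (homogenized X Y) := by
  rw [bordered, homogenized, vecMulVec_sumElim_sumElim, vecMulVec_sumElim_sumElim,
    transpose_vecMulVec, one_vecMulVec, vecMulVec_one, one_vecMulVec]
  rfl

theorem posSemidef_bordered_vecMulVec :
    (bordered X Y (vecMulVec (vecXt X) (vecXt X)) (vecMulVec (vecXt X) (vecY Y))
        (vecMulVec (vecY Y) (vecY Y))).PosSemidef := by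
  rw [bordered_vecMulVec]
  exact posSemidef_vecMulVec_self_star (homogenized X Y)

variable {X Y}

theorem FeasExact.feasRel_vecMulVec {k : ℕ} {ι : Type*} {A : ι → Matrix (Fin n) (Fin m) ℝ}
    {b : ι → ℝ} (h : FeasExact k A b X Y) :
    FeasRel k A b Y X (vecMulVec (vecXt X) (vecXt X)) (vecMulVec (vecXt X) (vecY Y))
      (vecMulVec (vecY Y) (vecY Y)) := by
  obtain ⟨hsymm, hidem, htrace, hAX, hYX⟩ := h
  have hproj : IsStarProjection Y := ⟨hidem, isHermitian_iff_isSymm.mpr hsymm⟩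
  have hYYt : Y * Yᵀ = Y := by rw [hsymm.eq, hidem]
  have hXtYt : Xᵀ * Yᵀ = Xᵀ := by rw [← transpose_mul, ← hYX]
  refine ⟨posSemidef_of_isStarProjection hproj, posSemidef_of_isStarProjection hproj.one_sub,
    htrace, hAX, isSymm_vecMulVec_self _, isSymm_vecMulVec_self _,
    posSemidef_bordered_vecMulVec X Y, fun p q => ?_, fun j q => ?_⟩
  · rw [vecY_eq_vec, sum_vecMulVec_vec_diagonal_block, hYYt]
  · rw [vecXt_eq_vec_transpose, vecY_eq_vec, sum_vecMulVec_vec_diagonal_block, hXtYt,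
      transpose_apply]

end Lifting

theorem stmt13_general {n m : ℕ} (k : ℕ)
    (C : Matrix (Fin n) (Fin n) ℝ) (H : Matrix (Fin n × Fin m) (Fin n × Fin m) ℝ)
    (D : Matrix (Fin n) (Fin m) ℝ)
    {ι : Type*} (A : ι → Matrix (Fin n) (Fin m) ℝ) (b : ι → ℝ) :
    (sInf {x : EReal | ∃ Y X Wxx Wxy Wyy, FeasRel k A b Y X Wxx Wxy Wyy ∧
        x = ((frob C Y + frob Wxx H + frob D X : ℝ) : EReal)}
      ≤ sInf {x : EReal | ∃ X Y, FeasExact k A b X Y ∧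
        x = ((frob C Y + vecXt X ⬝ᵥ H.mulVec (vecXt X) + frob D X : ℝ) : EReal)}) ∧
    (∀ X Y, FeasExact k A b X Y →
      FeasRel k A b Y X
        (Matrix.vecMulVec (vecXt X) (vecXt X))
        (Matrix.vecMulVec (vecXt X) (vecY Y))
        (Matrix.vecMulVec (vecY Y) (vecY Y)) ∧
      frob C Y + frob (Matrix.vecMulVec (vecXt X) (vecXt X)) H + frob D X
        = frob C Y + vecXt X ⬝ᵥ H.mulVec (vecXt X) + frob D X) := by
  refine ⟨sInf_le_sInf ?_, fun X Y hXY => ⟨hXY.feasRel_vecMulVec, by rw [frob_vecMulVec]⟩⟩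
  rintro _ ⟨X, Y, hXY, rfl⟩
  exact ⟨Y, X, _, _, _, hXY.feasRel_vecMulVec, by rw [frob_vecMulVec]⟩

/-- Proposition 3.1.
The Shor relaxation value `v_rel` is at most the exact value `v*`; more
precisely, every feasible `(X,Y)` of the exact problem lifts, via rank-one
outer products, to a feasible point of the relaxation with the same objective
value. -/
theorem stmt13 {n m : ℕ} (hn : 1 ≤ n) (hm : 1 ≤ m) (k : ℕ)
    (C : Matrix (Fin n) (Fin n) ℝ) (hC : C.PosSemidef)
    (H : Matrix (Fin n × Fin m) (Fin n × Fin m) ℝ) (hH : H.PosSemidef)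
    (D : Matrix (Fin n) (Fin m) ℝ)
    {ι : Type*} [Fintype ι] (A : ι → Matrix (Fin n) (Fin m) ℝ) (b : ι → ℝ) :
    (sInf {x : EReal | ∃ Y X Wxx Wxy Wyy, FeasRel k A b Y X Wxx Wxy Wyy ∧
        x = ((frob C Y + frob Wxx H + frob D X : ℝ) : EReal)}
      ≤ sInf {x : EReal | ∃ X Y, FeasExact k A b X Y ∧
        x = ((frob C Y + vecXt X ⬝ᵥ H.mulVec (vecXt X) + frob D X : ℝ) : EReal)}) ∧
    (∀ X Y, FeasExact k A b X Y →
      FeasRel k A b Y X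
        (Matrix.vecMulVec (vecXt X) (vecXt X))
        (Matrix.vecMulVec (vecXt X) (vecY Y))
        (Matrix.vecMulVec (vecY Y) (vecY Y)) ∧
      frob C Y + frob (Matrix.vecMulVec (vecXt X) (vecXt X)) H + frob D X
        = frob C Y + vecXt X ⬝ᵥ H.mulVec (vecXt X) + frob D X) :=
  stmt13_general k C H D A b
end

section
/- Let n, m ≥ 1, k ∈ ℕ, C ∈ S^n_+, H ∈ S^{nm}_+, D ∈ ℝ^{n×m}, and let (A_i, b_i)_{i∈I} be a finite family with A_i ∈ ℝ^{n×m}, b_i ∈ ℝ. Define v_full as the infimum of ⟨C,Y⟩ + ⟨W_xx, H⟩ + ⟨D,X⟩ over tuples (Y, X, W_xx, W_xy, W_yy) with Y ∈ S^n_+, Y ⪯ I_n, tr(Y) ≤ k; X ∈ ℝ^{n×m} with ⟨A_i,X⟩ ≤ b_i for all i ∈ I; W_xx ∈ S^{nm}, W_yy ∈ S^{n²}, W_xy ∈ ℝ^{nm×n²}; [[1, vec(X^⊤)^⊤, vec(Y)^⊤],[vec(X^⊤), W_xx, W_xy],[vec(Y), W_xy^⊤, W_yy]] ⪰ 0; Σ_{i∈[n]}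 W_yy^{(i,i)} = Y; Σ_{i∈[n]} W_xy^{(i,i)} = X^⊤. Define v_compact as the infimum of ⟨C,Y⟩ + ⟨W_xx, H⟩ + ⟨D,X⟩ over tuples (Y, X, W_xx) with Y ∈ S^n_+, Y ⪯ I_n, tr(Y) ≤ k; X ∈ ℝ^{n×m} with ⟨A_i,X⟩ ≤ b_i for all i; W_xx ∈ S^{nm}_+ with W_xx ⪰ vec(X^⊤)vec(X^⊤)^⊤; and [[Σ_{i∈[n]} W_xx^{(i,i)}, X^⊤],[X, Y]] ⪰ 0, where W_xx^{(i,i)} ∈ ℝ^{m×m} are the diagonal m×m blocks of W_xx. Then v_full = v_compact. -/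
open Matrix

/-!
Write `v = vec(Xᵀ)`, `y = vec(Y)` and let `tr` sum the diagonal blocks. Summing the diagonal blocks
of a feasible bordered matrix gives the compact block constraint. Conversely, set
`V = Wxx - v vᵀ ⪰ 0`, so that `tr V = tr Wxx - Xᵀ X`. By a Schur complement against the border `1`,
it suffices to extend `V` to a matrix `[[V, Q], [Qᵀ, R]] ⪰ 0` with `tr Q = (X - Y X)ᵀ` and
`tr R = Y - Y²`, and then take `Wxy = Q + v yᵀ`, `Wyy = R + y yᵀ`. The traces are consistent:
`[[tr V, (X - Y X)ᵀ], [X - Y X, Y - Y²]] ⪰ 0` because `Y ⪯ I`. This gives a matrix `L` with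
`L (tr V) = X - Y X` and `Y - Y² - L (tr V) Lᵀ ⪰ 0`; take `Q = V (I ⊗ L)ᵀ`, and for `R` take
`(I ⊗ L) V (I ⊗ L)ᵀ` plus a positive semidefinite term whose trace is that slack.
-/

open scoped Kronecker

section PosSemidef

variable {m n R : Type*}

theorem posSemidef_fromBlocks_mul_mul_add [Ring R] [PartialOrder R] [StarRing R] [AddLeftMono R]
    [Fintype m] [Finite n] {A : Matrix m m R} {E : Matrix n n R} (hA : A.PosSemidef)
    (hE : E.PosSemidef) (K : Matrix n m R) :
    (fromBlocks A (A * Kᴴ) (K * A) (K * A * Kᴴ + E)).PosSemidef := by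
  classical
  have := Fintype.ofFinite n
  have hsum := (hA.mul_mul_conjTranspose_same (fromRows 1 K)).add
    (hE.mul_mul_conjTranspose_same (fromRows (0 : Matrix m n R) 1))
  convert hsum using 1
  rw [conjTranspose_fromRows_eq_fromCols_conjTranspose, fromRows_mul, fromRows_mul_fromCols,
    conjTranspose_fromRows_eq_fromCols_conjTranspose, fromRows_mul, fromRows_mul_fromCols,
    fromBlocks_add]
  simp

variable [CommRing R] [PartialOrder R] [StarRing R] [StarOrderedRing R] [NoZeroDivisors R]

theorem posSemidef_fromBlocks_one₁₁ [Fintype m] [DecidableEq m] [Finite n] (B : Matrix m n R)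
    (D : Matrix n n R) :
    (fromBlocks 1 B Bᴴ D).PosSemidef ↔ (D - Bᴴ * B).PosSemidef := by
  let := invertibleOne (α := Matrix m m R)
  simpa using PosDef.fromBlocks₁₁ B D (PosDef.one (n := m) (R := R))

theorem posSemidef_fromBlocks_one₂₂ [Finite m] [Fintype n] [DecidableEq n] (A : Matrix m m R)
    (B : Matrix m n R) :
    (fromBlocks A B Bᴴ 1).PosSemidef ↔ (A - B * Bᴴ).PosSemidef := by
  let := invertibleOne (α := Matrix n n R)
  simpa using PosDef.fromBlocks₂₂ A B (PosDef.one (n := n) (R := R))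

/- Both differences are Schur complements of `[[M, M E], [Eᴴ M, 1]]`. -/
theorem posSemidef_sub_mul_conjTranspose_of_one_sub [Fintype m] [Fintype n] [DecidableEq n]
    {M : Matrix m m R} (hM : M.PosSemidef) (E : Matrix m n R)
    (hE : (1 - Eᴴ * M * E).PosSemidef) :
    (M - M * E * (M * E)ᴴ).PosSemidef := by
  rw [← posSemidef_fromBlocks_one₂₂]
  simpa [hM.isHermitian.eq] using posSemidef_fromBlocks_mul_mul_add hM hE Eᴴ

theorem posSemidef_fromBlocks_sub_of_one_sub [Finite m] [Fintype n] [DecidableEq n]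
    {S : Matrix m m R} {X : Matrix n m R} {Y : Matrix n n R}
    (h : (fromBlocks S Xᴴ X Y).PosSemidef) (hY : (1 - Y).PosSemidef) :
    (fromBlocks (S - Xᴴ * X) (X - Y * X)ᴴ (X - Y * X) (Y - Y * Y)).PosSemidef := by
  have := Fintype.ofFinite m
  have hYherm : Yᴴ = Y := (isHermitian_fromBlocks_iff.1 h.isHermitian).2.2.2
  let E : Matrix (m ⊕ n) n R := fromRows 0 1
  have hME : fromBlocks S Xᴴ X Y * E = fromRows Xᴴ Y := by
    simp [E, fromBlocks_mul_fromRows]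
  have hEME : Eᴴ * fromBlocks S Xᴴ X Y * E = Y := by
    simp [E, Matrix.mul_assoc, hME, conjTranspose_fromRows_eq_fromCols_conjTranspose,
      fromCols_mul_fromRows]
  have hcompl := posSemidef_sub_mul_conjTranspose_of_one_sub h E (hEME.symm ▸ hY)
  simpa [hME, conjTranspose_fromRows_eq_fromCols_conjTranspose, fromRows_mul_fromCols,
    hYherm, sub_eq_add_neg, fromBlocks_neg, fromBlocks_add] using hcompl

end PosSemidef

section SchurComplement

theorem exists_mul_eq_of_ker_mulVecLin_le {l m n F : Type*} [Finite l] [Fintype m] [Fintype n]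
    [Field F] {A : Matrix m n F} {B : Matrix l n F}
    (h : LinearMap.ker A.mulVecLin ≤ LinearMap.ker B.mulVecLin) :
    ∃ L : Matrix l m F, L * A = B := by
  classical
  have := Fintype.ofFinite l
  obtain ⟨g, hg⟩ := LinearMap.exists_extend
    ((LinearMap.ker A.mulVecLin).liftQ B.mulVecLin h ∘ₗ
      A.mulVecLin.quotKerEquivRange.symm.toLinearMap)
  have hgA (x : n → F) : g (A.mulVecLin x) = B.mulVecLin x := by
    have hgx := LinearMap.congr_fun hg ⟨A.mulVecLin x, LinearMap.mem_range_self _ x⟩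
    rwa [LinearMap.comp_apply, LinearMap.comp_apply, LinearEquiv.coe_coe,
      LinearMap.quotKerEquivRange_symm_apply_image] at hgx
  refine ⟨LinearMap.toMatrix' g, toLin'.injective (LinearMap.ext fun x => ?_)⟩
  simpa using hgA x

open scoped ComplexOrder

variable {𝕜 m n : Type*} [RCLike 𝕜] [Fintype m] [Finite n]
  {S : Matrix m m 𝕜} {B : Matrix n m 𝕜} {T : Matrix n n 𝕜}

theorem ker_mulVecLin_le_of_posSemidef_fromBlocks (h : (fromBlocks S Bᴴ B T).PosSemidef) :
    LinearMap.ker S.mulVecLin ≤ LinearMap.ker B.mulVecLin := by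
  have := Fintype.ofFinite n
  intro x (hx : S *ᵥ x = 0)
  have hnull : fromBlocks S Bᴴ B T *ᵥ Sum.elim x 0 = 0 :=
    (h.dotProduct_mulVec_zero_iff _).1 (by
      simp [fromBlocks_mulVec, hx, dotProduct, Fintype.sum_sum_type])
  ext i
  simpa [fromBlocks_mulVec] using congrFun hnull (Sum.inr i)

theorem exists_mul_eq_and_posSemidef_sub (h : (fromBlocks S Bᴴ B T).PosSemidef) :
    ∃ L : Matrix n m 𝕜, L * S = B ∧ (T - L * S * Lᴴ).PosSemidef := by
  classical
  have := Fintype.ofFinite n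
  obtain ⟨L, rfl⟩ :=
    exists_mul_eq_of_ker_mulVecLin_le (ker_mulVecLin_le_of_posSemidef_fromBlocks h)
  have hS : Sᴴ = S := (isHermitian_fromBlocks_iff.1 h.isHermitian).1
  have hcongr := h.mul_mul_conjTranspose_same (fromCols (-L) 1)
  refine ⟨L, rfl, ?_⟩
  simpa [fromCols_mul_fromBlocks, conjTranspose_fromCols_eq_fromRows_conjTranspose,
    fromCols_mul_fromRows, hS, Matrix.mul_assoc, neg_add_eq_sub] using hcongr

end SchurComplement

section BlockTrace

/-- The sum of the diagonal blocks of an `ι × ι` array of `a × b` blocks, i.e. the partial trace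
over `ι`. The first component of an index selects the block, as in `Matrix.vec`. -/
def blockTrace {ι a b R : Type*} [Fintype ι] [AddCommMonoid R] (M : Matrix (ι × a) (ι × b) R) :
    Matrix a b R :=
  of fun p q => ∑ i, M (i, p) (i, q)

variable {ι a b c R : Type*} [Fintype ι]

theorem blockTrace_add [AddCommMonoid R] (M N : Matrix (ι × a) (ι × b) R) :
    blockTrace (M + N) = blockTrace M + blockTrace N := by
  ext p q
  simp [blockTrace, Finset.sum_add_distrib]

theorem blockTrace_sub [AddCommGroup R] (M N : Matrix (ι × a) (ι × b) R) :
    blockTrace (M - N) = blockTrace M - blockTrace N := by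
  ext p q
  simp [blockTrace, Finset.sum_sub_distrib]

theorem blockTrace_kronecker [NonUnitalNonAssocSemiring R] (A : Matrix ι ι R) (B : Matrix a b R) :
    blockTrace (A ⊗ₖ B) = A.trace • B := by
  ext p q
  simp [blockTrace, trace, Finset.sum_mul]

theorem blockTrace_one_kronecker_mul [NonAssocSemiring R] [DecidableEq ι] [Fintype b]
    (L : Matrix a b R) (M : Matrix (ι × b) (ι × c) R) :
    blockTrace (((1 : Matrix ι ι R) ⊗ₖ L) * M) = L * blockTrace M := by
  ext p q
  simp [blockTrace, mul_apply, Fintype.sum_prod_type, one_apply, Finset.mul_sum,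
    Finset.sum_comm (s := (Finset.univ : Finset ι))]

theorem blockTrace_mul_one_kronecker [NonAssocSemiring R] [DecidableEq ι] [Fintype b]
    (M : Matrix (ι × a) (ι × b) R) (L : Matrix b c R) :
    blockTrace (M * ((1 : Matrix ι ι R) ⊗ₖ L)) = blockTrace M * L := by
  ext p q
  simp [blockTrace, mul_apply, Fintype.sum_prod_type, one_apply, Finset.sum_mul,
    Finset.sum_comm (s := (Finset.univ : Finset ι))]

theorem blockTrace_vecMulVec_vec [NonUnitalNonAssocSemiring R] (A : Matrix a ι R)
    (B : Matrix b ι R) : blockTrace (vecMulVec A.vec B.vec) = A * Bᵀ := by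
  ext p q
  simp [blockTrace, vecMulVec_apply, mul_apply]

theorem posSemidef_fromBlocks_blockTrace [Ring R] [PartialOrder R] [StarRing R] [AddLeftMono R]
    {P : Matrix (ι × a) (ι × a) R} {Q : Matrix (ι × a) (ι × b) R} {Q' : Matrix (ι × b) (ι × a) R}
    {S : Matrix (ι × b) (ι × b) R} (h : (fromBlocks P Q Q' S).PosSemidef) :
    (fromBlocks (blockTrace P) (blockTrace Q) (blockTrace Q') (blockTrace S)).PosSemidef := by
  have hsum := posSemidef_sum Finset.univ fun (i : ι) _ =>
    h.submatrix (Sum.map (Prod.mk i) (Prod.mk i))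
  convert hsum using 1
  ext (p | p) (q | q) <;> simp [blockTrace, Matrix.sum_apply]

open scoped ComplexOrder in
theorem exists_posSemidef_fromBlocks_blockTrace_eq {𝕜 : Type*} [RCLike 𝕜] [Nonempty ι]
    [Finite a] [Finite b] {V : Matrix (ι × a) (ι × a) 𝕜} {B : Matrix b a 𝕜} {T : Matrix b b 𝕜}
    (hV : V.PosSemidef) (h : (fromBlocks (blockTrace V) Bᴴ B T).PosSemidef) :
    ∃ (Q : Matrix (ι × a) (ι × b) 𝕜) (R : Matrix (ι × b) (ι × b) 𝕜),
      (fromBlocks V Q Qᴴ R).PosSemidef ∧ blockTrace Q = Bᴴ ∧ blockTrace R = T := by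
  classical
  have := Fintype.ofFinite a
  have := Fintype.ofFinite b
  obtain ⟨L, hL, hT⟩ := exists_mul_eq_and_posSemidef_sub h
  have hS : (blockTrace V)ᴴ = blockTrace V := (isHermitian_fromBlocks_iff.1 h.isHermitian).1
  let K : Matrix (ι × b) (ι × a) 𝕜 := (1 : Matrix ι ι 𝕜) ⊗ₖ L
  -- Spreads the slack evenly over the diagonal blocks, since `(card ι)⁻¹ • 1` has trace one.
  let E : Matrix (ι × b) (ι × b) 𝕜 :=
    ((Fintype.card ι : 𝕜)⁻¹ • 1) ⊗ₖ (T - L * blockTrace V * Lᴴ)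
  have hK : Kᴴ = (1 : Matrix ι ι 𝕜) ⊗ₖ Lᴴ := by simp [K, conjTranspose_kronecker]
  have hE : E.PosSemidef := (PosSemidef.one.smul (by positivity)).kronecker hT
  have hEtrace : blockTrace E = T - L * blockTrace V * Lᴴ := by
    simp [E, blockTrace_kronecker, Matrix.trace_smul]
  refine ⟨V * Kᴴ, K * V * Kᴴ + E, ?_, ?_, ?_⟩
  · simpa [hV.isHermitian.eq] using posSemidef_fromBlocks_mul_mul_add hV hE K
  · rw [hK, blockTrace_mul_one_kronecker, ← hL, conjTranspose_mul, hS]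
  · rw [blockTrace_add, hEtrace, hK, blockTrace_mul_one_kronecker, blockTrace_one_kronecker_mul,
      add_sub_cancel]

end BlockTrace

section ShorRelaxation

variable {n m : ℕ} {X : Matrix (Fin n) (Fin m) ℝ} {Y : Matrix (Fin n) (Fin n) ℝ}
  {Wxx : Matrix (Fin n × Fin m) (Fin n × Fin m) ℝ}

theorem posSemidef_bordered_iff {Wxy : Matrix (Fin n × Fin m) (Fin n × Fin n) ℝ}
    {Wyy : Matrix (Fin n × Fin n) (Fin n × Fin n) ℝ} :
    (bordered X Y Wxx Wxy Wyy).PosSemidef ↔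
      (fromBlocks (Wxx - vecMulVec (vecXt X) (vecXt X)) (Wxy - vecMulVec (vecXt X) (vecY Y))
        (Wxy - vecMulVec (vecXt X) (vecY Y))ᴴ (Wyy - vecMulVec (vecY Y) (vecY Y))).PosSemidef := by
  let r : Matrix Unit _ ℝ := replicateRow Unit (Sum.elim (vecXt X) (vecY Y))
  have hbordered : bordered X Y Wxx Wxy Wyy = fromBlocks 1 r rᴴ (fromBlocks Wxx Wxy Wxyᵀ Wyy) := by
    ext (_ | _) (_ | _) <;> simp [bordered, r]
  rw [hbordered, posSemidef_fromBlocks_one₁₁]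
  congr! 1
  ext (_ | _) (_ | _) <;> simp [r, mul_apply, vecMulVec_apply, mul_comm]

theorem compact_constraints_of_posSemidef_bordered {Wxy : Matrix (Fin n × Fin m) (Fin n × Fin n) ℝ}
    {Wyy : Matrix (Fin n × Fin n) (Fin n × Fin n) ℝ}
    (h : (bordered X Y Wxx Wxy Wyy).PosSemidef) (hWyy : blockTrace Wyy = Y)
    (hWxy : blockTrace Wxy = Xᵀ) :
    Wxx.PosSemidef ∧ (Wxx - vecMulVec (vecXt X) (vecXt X)).PosSemidef ∧
      (fromBlocks (blockTrace Wxx) Xᵀ X Y).PosSemidef := by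
  have hW : (fromBlocks Wxx Wxy Wxyᵀ Wyy).PosSemidef := h.submatrix Sum.inr
  refine ⟨hW.submatrix Sum.inl, (posSemidef_bordered_iff.1 h).submatrix Sum.inl, ?_⟩
  have hWyx : blockTrace Wxyᵀ = X := congrArg transpose hWxy
  simpa only [hWyy, hWxy, hWyx] using posSemidef_fromBlocks_blockTrace hW

theorem exists_posSemidef_bordered_of_compact_constraints (hn : 1 ≤ n) (hY : (1 - Y).PosSemidef)
    (hWxx : (Wxx - vecMulVec (vecXt X) (vecXt X)).PosSemidef)
    (h : (fromBlocks (blockTrace Wxx) Xᵀ X Y).PosSemidef) :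
    ∃ (Wxy : Matrix (Fin n × Fin m) (Fin n × Fin n) ℝ)
      (Wyy : Matrix (Fin n × Fin n) (Fin n × Fin n) ℝ),
      (bordered X Y Wxx Wxy Wyy).PosSemidef ∧ blockTrace Wyy = Y ∧ blockTrace Wxy = Xᵀ := by
  have : Nonempty (Fin n) := ⟨⟨0, hn⟩⟩
  have hYsymm : Yᵀ = Y := (isHermitian_fromBlocks_iff.1 h.isHermitian).2.2.2
  have hcentered : (fromBlocks (blockTrace (Wxx - vecMulVec (vecXt X) (vecXt X)))
      (X - Y * X)ᴴ (X - Y * X) (Y - Y * Y)).PosSemidef := by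
    have hXX : blockTrace (vecMulVec (vecXt X) (vecXt X)) = Xᵀ * X :=
      blockTrace_vecMulVec_vec Xᵀ Xᵀ
    rw [blockTrace_sub, hXX]
    exact posSemidef_fromBlocks_sub_of_one_sub h hY
  obtain ⟨Q, R, hQR, hQ, hR⟩ := exists_posSemidef_fromBlocks_blockTrace_eq hWxx hcentered
  refine ⟨Q + vecMulVec (vecXt X) (vecY Y), R + vecMulVec (vecY Y) (vecY Y), ?_, ?_, ?_⟩
  · simpa only [posSemidef_bordered_iff, add_sub_cancel_right] using hQR
  · have hYY : blockTrace (vecMulVec (vecY Y) (vecY Y)) = Y * Yᵀ := blockTrace_vecMulVec_vec Y Y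
    rw [blockTrace_add, hR, hYY, hYsymm, sub_add_cancel]
  · have hXY : blockTrace (vecMulVec (vecXt X) (vecY Y)) = Xᵀ * Yᵀ := blockTrace_vecMulVec_vec Xᵀ Y
    rw [blockTrace_add, hQ, hXY]
    simp

end ShorRelaxation

theorem stmt14_general {n m : ℕ} (hn : 1 ≤ n) {α : Type*} [InfSet α]
    (𝒴 : Set (Matrix (Fin n) (Fin n) ℝ)) (𝒳 : Set (Matrix (Fin n) (Fin m) ℝ))
    (f : Matrix (Fin n) (Fin n) ℝ → Matrix (Fin n) (Fin m) ℝ →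
      Matrix (Fin n × Fin m) (Fin n × Fin m) ℝ → α) :
    sInf {x : α | ∃ (Y : Matrix (Fin n) (Fin n) ℝ)
        (X : Matrix (Fin n) (Fin m) ℝ)
        (Wxx : Matrix (Fin n × Fin m) (Fin n × Fin m) ℝ)
        (Wxy : Matrix (Fin n × Fin m) (Fin n × Fin n) ℝ)
        (Wyy : Matrix (Fin n × Fin n) (Fin n × Fin n) ℝ),
        Y.PosSemidef ∧ (1 - Y).PosSemidef ∧ Y ∈ 𝒴 ∧ X ∈ 𝒳 ∧
        Wxx.IsSymm ∧ Wyy.IsSymm ∧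
        (bordered X Y Wxx Wxy Wyy).PosSemidef ∧
        (∀ p q : Fin n, (∑ i : Fin n, Wyy (i, p) (i, q)) = Y p q) ∧
        (∀ (j : Fin m) (q : Fin n), (∑ i : Fin n, Wxy (i, j) (i, q)) = X q j) ∧
        x = f Y X Wxx} =
      sInf {x : α | ∃ (Y : Matrix (Fin n) (Fin n) ℝ)
        (X : Matrix (Fin n) (Fin m) ℝ)
        (Wxx : Matrix (Fin n × Fin m) (Fin n × Fin m) ℝ),
        Y.PosSemidef ∧ (1 - Y).PosSemidef ∧ Y ∈ 𝒴 ∧ X ∈ 𝒳 ∧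
        Wxx.PosSemidef ∧
        (Wxx - vecMulVec (vecXt X) (vecXt X)).PosSemidef ∧
        (fromBlocks (of fun j l : Fin m => ∑ i : Fin n, Wxx (i, j) (i, l)) Xᵀ X Y).PosSemidef ∧
        x = f Y X Wxx} := by
  congr 1
  ext x
  constructor
  · rintro ⟨Y, X, Wxx, Wxy, Wyy, hY, hY1, hY𝒴, hX𝒳, -, -, hW, hWyy, hWxy, hx⟩
    obtain ⟨hWxx, hcov, hblock⟩ :=
      compact_constraints_of_posSemidef_bordered hW (Matrix.ext hWyy) (Matrix.ext hWxy)
    exact ⟨Y, X, Wxx, hY, hY1, hY𝒴, hX𝒳, hWxx, hcov, hblock, hx⟩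
  · rintro ⟨Y, X, Wxx, hY, hY1, hY𝒴, hX𝒳, hWxx, hcov, hblock, hx⟩
    obtain ⟨Wxy, Wyy, hW, hWyy, hWxy⟩ :=
      exists_posSemidef_bordered_of_compact_constraints hn hY1 hcov hblock
    have hWyySymm : Wyy.IsSymm := (hW.submatrix (Sum.inr ∘ Sum.inr)).isHermitian
    exact ⟨Y, X, Wxx, Wxy, Wyy, hY, hY1, hY𝒴, hX𝒳, hWxx.isHermitian, hWyySymm, hW,
      fun p q => congrFun₂ hWyy p q, fun j q => congrFun₂ hWxy j q, hx⟩

/-- Theorem 3.2: the full Shor relaxation (3.2) and the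
compact Shor relaxation (3.3) have the same optimal value. -/
theorem stmt14 {n m : ℕ} (hn : 1 ≤ n) (hm : 1 ≤ m) (k : ℕ)
    (C : Matrix (Fin n) (Fin n) ℝ) (hC : C.PosSemidef)
    (H : Matrix (Fin n × Fin m) (Fin n × Fin m) ℝ) (hH : H.PosSemidef)
    (D : Matrix (Fin n) (Fin m) ℝ)
    {ι : Type*} [Fintype ι] (A : ι → Matrix (Fin n) (Fin m) ℝ) (b : ι → ℝ) :
    sInf {x : EReal | ∃ (Y : Matrix (Fin n) (Fin n) ℝ)
        (X : Matrix (Fin n) (Fin m) ℝ)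
        (Wxx : Matrix (Fin n × Fin m) (Fin n × Fin m) ℝ)
        (Wxy : Matrix (Fin n × Fin m) (Fin n × Fin n) ℝ)
        (Wyy : Matrix (Fin n × Fin n) (Fin n × Fin n) ℝ),
        Y.PosSemidef ∧ ((1 : Matrix (Fin n) (Fin n) ℝ) - Y).PosSemidef ∧
        Y.trace ≤ (k : ℝ) ∧ (∀ i, frob (A i) X ≤ b i) ∧
        Wxx.IsSymm ∧ Wyy.IsSymm ∧
        (bordered X Y Wxx Wxy Wyy).PosSemidef ∧
        (∀ p q : Fin n, (∑ i : Fin n, Wyy (i, p) (i, q)) = Y p q) ∧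
        (∀ (j : Fin m) (q : Fin n), (∑ i : Fin n, Wxy (i, j) (i, q)) = X q j) ∧
        x = ((frob C Y + frob Wxx H + frob D X : ℝ) : EReal)} =
      sInf {x : EReal | ∃ (Y : Matrix (Fin n) (Fin n) ℝ)
        (X : Matrix (Fin n) (Fin m) ℝ)
        (Wxx : Matrix (Fin n × Fin m) (Fin n × Fin m) ℝ),
        Y.PosSemidef ∧ ((1 : Matrix (Fin n) (Fin n) ℝ) - Y).PosSemidef ∧
        Y.trace ≤ (k : ℝ) ∧ (∀ i, frob (A i) X ≤ b i) ∧
        Wxx.PosSemidef ∧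
        (Wxx - Matrix.vecMulVec (vecXt X) (vecXt X)).PosSemidef ∧
        (Matrix.fromBlocks
            (Matrix.of fun j l : Fin m => ∑ i : Fin n, Wxx (i, j) (i, l))
            Xᵀ X Y).PosSemidef ∧
        x = ((frob C Y + frob Wxx H + frob D X : ℝ) : EReal)} :=
  stmt14_general hn {Y | Y.trace ≤ (k : ℝ)} {X | ∀ i, frob (A i) X ≤ b i}
    fun Y X Wxx => ((frob C Y + frob Wxx H + frob D X : ℝ) : EReal)
end

section
/- Let n, m ≥ 1, k ∈ ℕ, γ > 0, C ∈ S^n_+, D ∈ ℝ^{n×m}, and let (A_i, b_i)_{i∈I} be a finite family with A_i ∈ ℝ^{n×m}, b_i ∈ ℝ. Define v_Shor as the infimum of ⟨C,Y⟩ + (1/(2γ))·tr(W_xx) + ⟨D,X⟩ over tuples (Y, X, W_xx) with Y ∈ S^n_+, Y ⪯ I_n, tr(Y) ≤ k; X ∈ ℝ^{n×m} with ⟨A_i,X⟩ ≤ b_i for all i ∈ I; W_xx ∈ S^{nm}_+ with W_xx ⪰ vec(X^⊤)vec(X^⊤)^⊤; and [[Σ_{i∈[n]} W_xx^{(i,i)},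 X^⊤],[X, Y]] ⪰ 0, where W_xx^{(i,i)} ∈ ℝ^{m×m} are the diagonal m×m blocks of W_xx. Define v_MPRT as the infimum of ⟨C,Y⟩ + (1/(2γ))·tr(θ) + ⟨D,X⟩ over tuples (Y, X, θ) with Y ∈ S^n_+, Y ⪯ I_n, tr(Y) ≤ k; X ∈ ℝ^{n×m} with ⟨A_i,X⟩ ≤ b_i for all i; θ ∈ S^m_+; and [[θ, X^⊤],[X, Y]] ⪰ 0. Then v_Shor ≥ v_MPRT; more precisely, every feasible (Y, X, W_xx) of the first problem yields a feasible (Y, X, θ) of the second problem with θ = Σ_{i∈[n]} W_xx^{(i,i)} and the same objective value. -/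
open Matrix

/-- Feasibility for the compact Shor relaxation with Frobenius regularization. -/
def FeasShor {n m : ℕ} (k : ℕ) {ι : Type*}
    (A : ι → Matrix (Fin n) (Fin m) ℝ) (b : ι → ℝ)
    (Y : Matrix (Fin n) (Fin n) ℝ) (X : Matrix (Fin n) (Fin m) ℝ)
    (Wxx : Matrix (Fin n × Fin m) (Fin n × Fin m) ℝ) : Prop :=
  Y.PosSemidef ∧ ((1 : Matrix (Fin n) (Fin n) ℝ) - Y).PosSemidef ∧
    Y.trace ≤ (k : ℝ) ∧ (∀ i, frob (A i) X ≤ b i) ∧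
    Wxx.PosSemidef ∧
    (Wxx - Matrix.vecMulVec (vecXt X) (vecXt X)).PosSemidef ∧
    (Matrix.fromBlocks
        (Matrix.of fun j l : Fin m => ∑ i : Fin n, Wxx (i, j) (i, l))
        Xᵀ X Y).PosSemidef

/-- Feasibility for the matrix perspective relaxation of Bertsimas et al. -/
def FeasMPRT {n m : ℕ} (k : ℕ) {ι : Type*}
    (A : ι → Matrix (Fin n) (Fin m) ℝ) (b : ι → ℝ)
    (Y : Matrix (Fin n) (Fin n) ℝ) (X : Matrix (Fin n) (Fin m) ℝ)
    (θ : Matrix (Fin m) (Fin m) ℝ) : Prop :=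
  Y.PosSemidef ∧ ((1 : Matrix (Fin n) (Fin n) ℝ) - Y).PosSemidef ∧
    Y.trace ≤ (k : ℝ) ∧ (∀ i, frob (A i) X ≤ b i) ∧
    θ.PosSemidef ∧ (Matrix.fromBlocks θ Xᵀ X Y).PosSemidef

section PartialTrace

variable {o p q R : Type*} [Fintype o] [AddCommMonoid R]

/-- The partial trace of a block matrix over its block index, i.e. the sum `Σᵢ W^{(i,i)}` of the
diagonal blocks. The first component of an index is the block, the second the position inside it;
`Matrix.blockDiag` uses the opposite order. -/
def partialTrace (W : Matrix (o × p) (o × q) R) : Matrix p q R :=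
  Matrix.of fun j l => ∑ i, W (i, j) (i, l)

theorem trace_partialTrace [Fintype p] (W : Matrix (o × p) (o × p) R) :
    (partialTrace W).trace = W.trace :=
  (Fintype.sum_prod_type_right fun x => W x x).symm

end PartialTrace

theorem posSemidef_of_posSemidef_fromBlocks₁₁ {p q R : Type*} [Ring R] [PartialOrder R] [StarRing R]
    {P : Matrix p p R} {Q : Matrix p q R} {S : Matrix q p R} {T : Matrix q q R}
    (h : (fromBlocks P Q S T).PosSemidef) : P.PosSemidef :=
  h.submatrix Sum.inl

theorem FeasShor.feasMPRT_partialTrace {n m k : ℕ} {ι : Type*}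
    {A : ι → Matrix (Fin n) (Fin m) ℝ} {b : ι → ℝ} {Y : Matrix (Fin n) (Fin n) ℝ}
    {X : Matrix (Fin n) (Fin m) ℝ} {Wxx : Matrix (Fin n × Fin m) (Fin n × Fin m) ℝ}
    (h : FeasShor k A b Y X Wxx) : FeasMPRT k A b Y X (partialTrace Wxx) := by
  obtain ⟨hY, hY_le_one, hY_trace, hX, -, -, h_blocks⟩ := h
  exact ⟨hY, hY_le_one, hY_trace, hX, posSemidef_of_posSemidef_fromBlocks₁₁ h_blocks, h_blocks⟩

theorem stmt15_general {n m : ℕ} (k : ℕ) {ι : Type*} (A : ι → Matrix (Fin n) (Fin m) ℝ)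
    (b : ι → ℝ) (F : Matrix (Fin n) (Fin n) ℝ → Matrix (Fin n) (Fin m) ℝ → ℝ → ℝ) :
    (sInf {x : EReal | ∃ Y X θ, FeasMPRT k A b Y X θ ∧ x = (F Y X θ.trace : EReal)}
      ≤ sInf {x : EReal | ∃ Y X Wxx, FeasShor k A b Y X Wxx ∧ x = (F Y X Wxx.trace : EReal)}) ∧
    (∀ Y X Wxx, FeasShor k A b Y X Wxx →
      FeasMPRT k A b Y X (partialTrace Wxx) ∧
      F Y X (partialTrace Wxx).trace = F Y X Wxx.trace) := by
  refine ⟨sInf_le_sInf ?_, fun Y X Wxx h =>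
    ⟨h.feasMPRT_partialTrace, by rw [trace_partialTrace]⟩⟩
  rintro _ ⟨Y, X, Wxx, h, rfl⟩
  exact ⟨Y, X, partialTrace Wxx, h.feasMPRT_partialTrace, by rw [trace_partialTrace]⟩

/-- Proposition 3.3. The compact Shor relaxation is at least
as strong as the matrix perspective relaxation: `v_Shor ≥ v_MPRT`; more
precisely, every Shor-feasible `(Y,X,Wxx)` yields an MPRT-feasible `(Y,X,θ)`
with `θ = Σᵢ Wxx^{(i,i)}` and the same objective value. -/
theorem stmt15 {n m : ℕ} (hn : 1 ≤ n) (hm : 1 ≤ m) (k : ℕ) (γ : ℝ) (hγ : 0 < γ)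
    (C : Matrix (Fin n) (Fin n) ℝ) (hC : C.PosSemidef)
    (D : Matrix (Fin n) (Fin m) ℝ)
    {ι : Type*} [Fintype ι] (A : ι → Matrix (Fin n) (Fin m) ℝ) (b : ι → ℝ) :
    (sInf {x : EReal | ∃ Y X θ, FeasMPRT k A b Y X θ ∧
        x = ((frob C Y + (1 / (2 * γ)) * θ.trace + frob D X : ℝ) : EReal)}
      ≤ sInf {x : EReal | ∃ Y X Wxx, FeasShor k A b Y X Wxx ∧
        x = ((frob C Y + (1 / (2 * γ)) * Wxx.trace + frob D X : ℝ) : EReal)}) ∧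
    (∀ Y X Wxx, FeasShor k A b Y X Wxx →
      FeasMPRT k A b Y X
        (Matrix.of fun j l : Fin m => ∑ i : Fin n, Wxx (i, j) (i, l)) ∧
      frob C Y + (1 / (2 * γ))
          * (Matrix.of fun j l : Fin m => ∑ i : Fin n, Wxx (i, j) (i, l)).trace
          + frob D X
        = frob C Y + (1 / (2 * γ)) * Wxx.trace + frob D X) :=
  stmt15_general k A b fun Y X t => frob C Y + (1 / (2 * γ)) * t + frob D X
end

section
/- Let n ≥ 1, k ∈ ℕ, Q ∈ S^n_+, c ∈ ℝ^n with c ≥ 0 (componentwise), d ∈ ℝ^n, and let (A, b) define the linear constraints Ax ≤ b with A ∈ ℝ^{ℓ×n}, b ∈ ℝ^ℓ. Define v₁ as the infimum of c^⊤z + (1/2)⟨Q, W_xx⟩ + d^⊤x over tuples (z, x, W) with z ∈ [0,1]^n, Σ_i z_i ≤ k; x ∈ ℝ^n with Ax ≤ b; W ∈ S^{2n} partitioned into n×n blocks W = [[W_xx, W_xz],[W_xz^⊤, W_zz]] satisfying W ⪰ (x; z)(x; z)^⊤ (the outer product of the concatenated vector (x; z) ∈ ℝ^{2n} with itself), diag(W_zz)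 = z, and diag(W_xz) = x. Define v₂ as the infimum of c^⊤z + (1/2)⟨Q, X⟩ + d^⊤x over tuples (z, x, X) with z ∈ [0,1]^n, Σ_i z_i ≤ k; x ∈ ℝ^n with Ax ≤ b; X ∈ S^n with X ⪰ xx^⊤ and x_i² ≤ X_{i,i}·z_i for every i ∈ [n]. Then v₁ = v₂. -/
open Matrix

/-!
For fixed `z` and `y` (the `x` of the paper) the two problems project onto the same set of
matrices `X = W_xx`. Subtracting the outer product of `(y; z)` from `W`, the question is whether
the positive semidefinite matrix `S = X - y yᵀ` extends to a positive semidefinite `2n × 2n` matrix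
whose off-diagonal block has diagonal `p i = y i * (1 - z i)` and whose lower block has diagonal
`q i = z i * (1 - z i)`. The `2 × 2` principal minors force `p i ^ 2 ≤ S i i * q i`, and this
suffices: scale the rows and columns of a second copy of `S` by `p i / S i i`, then add the missing
nonnegative diagonal. For `z i ∈ [0, 1]` and `y i ^ 2 ≤ X i i`, that inequality is equivalent to the
perspective constraint `y i ^ 2 ≤ X i i * z i`.
-/

section PosSemidef

theorem posSemidef_fromBlocks_mul_conjTranspose {R m n : Type*} [Ring R] [PartialOrder R]
    [StarRing R] [AddLeftMono R] [Fintype m] [Finite n] {S : Matrix m m R} (hS : S.PosSemidef)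
    (B : Matrix n m R) {G : Matrix n n R} (hG : G.PosSemidef) :
    (fromBlocks S (S * Bᴴ) (B * S) (B * S * Bᴴ + G)).PosSemidef := by
  classical
  cases nonempty_fintype n
  let L : Matrix (m ⊕ n) m R := fromRows 1 B
  let E : Matrix (m ⊕ n) n R := fromRows 0 1
  have hsum : L * S * Lᴴ + E * G * Eᴴ = fromBlocks S (S * Bᴴ) (B * S) (B * S * Bᴴ + G) := by
    ext (i | i) (j | j) <;>
      simp [L, E, conjTranspose_fromRows_eq_fromCols_conjTranspose, fromRows_mul]
  exact hsum ▸ (hS.mul_mul_conjTranspose_same L).add (hG.mul_mul_conjTranspose_same E)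

variable {ι : Type*}

theorem isSymm_of_posSemidef_sub_vecMulVec_self {R : Type*} [CommRing R] [PartialOrder R]
    [StarRing R] [TrivialStar R] {M : Matrix ι ι R} {v : ι → R}
    (h : (M - vecMulVec v v).PosSemidef) : M.IsSymm := by
  have hv : (vecMulVec v v).IsSymm := transpose_vecMulVec v v
  simpa only [sub_add_cancel] using (isHermitian_iff_isSymm.mp h.isHermitian).add hv

theorem sq_apply_le_diag_mul_diag_of_posSemidef {M : Matrix ι ι ℝ} (hM : M.PosSemidef) (i j : ι) :
    M i j ^ 2 ≤ M i i * M j j := by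
  have hdet : 0 ≤ (M.submatrix ![i, j] ![i, j]).det := (hM.submatrix ![i, j]).det_nonneg
  have hsymm : M j i = M i j := (isHermitian_iff_isSymm.mp hM.isHermitian).apply i j
  simp only [det_fin_two, submatrix_apply, cons_val_zero, cons_val_one, hsymm] at hdet
  linarith

-- The witness `p / s` also covers `s = 0`: there `p = 0` and Lean's `p / 0` is `0`.
theorem exists_mul_eq_and_sq_mul_le {K : Type*} [Field K] [LinearOrder K] [IsStrictOrderedRing K]
    {s p q : K} (hs : 0 ≤ s) (hq : 0 ≤ q) (h : p ^ 2 ≤ s * q) :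
    ∃ β, β * s = p ∧ β ^ 2 * s ≤ q := by
  refine ⟨p / s, ?_⟩
  rcases hs.eq_or_lt with rfl | hs
  · have hp : p = 0 := by simpa using h.antisymm (by simpa using sq_nonneg p)
    simp [hp, hq]
  · refine ⟨div_mul_cancel₀ p hs.ne', ?_⟩
    calc (p / s) ^ 2 * s = p ^ 2 / s := by field_simp
      _ ≤ q := (div_le_iff₀' hs).mpr h

theorem exists_posSemidef_extension_iff [Finite ι] {S : Matrix ι ι ℝ} {p q : ι → ℝ} :
    (∃ M : Matrix (ι ⊕ ι) (ι ⊕ ι) ℝ, M.PosSemidef ∧ M.toBlocks₁₁ = S ∧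
        (∀ i, M (.inl i) (.inr i) = p i) ∧ ∀ i, M (.inr i) (.inr i) = q i) ↔
      S.PosSemidef ∧ 0 ≤ q ∧ ∀ i, p i ^ 2 ≤ S i i * q i := by
  classical
  cases nonempty_fintype ι
  constructor
  · rintro ⟨M, hM, rfl, hp, hq⟩
    refine ⟨hM.submatrix Sum.inl, fun i ↦ hq i ▸ hM.diag_nonneg, fun i ↦ ?_⟩
    rw [← hp, ← hq]
    exact sq_apply_le_diag_mul_diag_of_posSemidef hM (.inl i) (.inr i)
  · rintro ⟨hS, hq, hpq⟩
    choose β hβp hβq using fun i ↦ exists_mul_eq_and_sq_mul_le hS.diag_nonneg (hq i) (hpq i)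
    have hG : (diagonal fun i ↦ q i - β i ^ 2 * S i i).PosSemidef :=
      .diagonal fun i ↦ sub_nonneg.mpr (hβq i)
    refine ⟨_, posSemidef_fromBlocks_mul_conjTranspose hS (diagonal β) hG,
      toBlocks_fromBlocks₁₁ .., fun i ↦ ?_, fun i ↦ ?_⟩
    · simp [← hβp, mul_comm]
    · simp only [fromBlocks_apply₂₂, Matrix.add_apply, diagonal_conjTranspose, star_trivial,
        mul_diagonal, diagonal_mul, diagonal_apply_eq]
      ring

end PosSemidef

section Relaxations

theorem sq_mul_one_sub_le_iff {R : Type*} [CommRing R] [LinearOrder R] [IsStrictOrderedRing R]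
    {x X z : R} (hz : z ≤ 1) (hX : x ^ 2 ≤ X) :
    (x * (1 - z)) ^ 2 ≤ (X - x ^ 2) * (z * (1 - z)) ↔ x ^ 2 ≤ X * z := by
  have hdiff : (X - x ^ 2) * (z * (1 - z)) - (x * (1 - z)) ^ 2 = (1 - z) * (X * z - x ^ 2) := by
    ring
  rw [← sub_nonneg, hdiff, ← sub_nonneg (a := X * z)]
  rcases hz.eq_or_lt with rfl | hz
  · simpa using hX
  · exact mul_nonneg_iff_of_pos_left (sub_pos.mpr hz)

variable {ι : Type*}

theorem exists_shor_matrix_iff_perspective [Finite ι] {y z : ι → ℝ}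
    (hz : ∀ i, z i ∈ Set.Icc (0 : ℝ) 1) {X : Matrix ι ι ℝ} :
    (∃ W : Matrix (ι ⊕ ι) (ι ⊕ ι) ℝ,
        (W - vecMulVec (Sum.elim y z) (Sum.elim y z)).PosSemidef ∧
        (∀ i, W (.inr i) (.inr i) = z i) ∧ (∀ i, W (.inl i) (.inr i) = y i) ∧
        W.toBlocks₁₁ = X) ↔
      (X - vecMulVec y y).PosSemidef ∧ ∀ i, y i ^ 2 ≤ X i i * z i := by
  set V := vecMulVec (Sum.elim y z) (Sum.elim y z) with hV
  calc
    _ ↔ ∃ M : Matrix (ι ⊕ ι) (ι ⊕ ι) ℝ, M.PosSemidef ∧ M.toBlocks₁₁ = X - vecMulVec y y ∧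
          (∀ i, M (.inl i) (.inr i) = y i * (1 - z i)) ∧
          ∀ i, M (.inr i) (.inr i) = z i * (1 - z i) := by
      constructor
      · rintro ⟨W, hW, hWz, hWy, rfl⟩
        refine ⟨W - V, hW, rfl, fun i ↦ ?_, fun i ↦ ?_⟩
        · simp [hV, hWy, vecMulVec_apply, mul_one_sub]
        · simp [hV, hWz, vecMulVec_apply, mul_one_sub]
      · rintro ⟨M, hM, hMX, hMy, hMz⟩
        refine ⟨M + V, by rwa [add_sub_cancel_right], fun i ↦ ?_, fun i ↦ ?_, ?_⟩
        · simp [hV, hMz, vecMulVec_apply, mul_one_sub]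
        · simp [hV, hMy, vecMulVec_apply, mul_one_sub]
        · exact eq_sub_iff_add_eq.mp hMX
    _ ↔ _ := exists_posSemidef_extension_iff
    _ ↔ _ := by
      refine and_congr_right fun hX ↦ ?_
      have hyX i : y i ^ 2 ≤ X i i := by
        simpa [vecMulVec_apply, ← sq] using hX.diag_nonneg (i := i)
      have hzz : 0 ≤ fun i ↦ z i * (1 - z i) := fun i ↦
        mul_nonneg (hz i).1 (sub_nonneg.mpr (hz i).2)
      simp only [hzz, true_and, Matrix.sub_apply, vecMulVec_apply, ← sq,
        sq_mul_one_sub_le_iff (hz _).2 (hyX _)]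

theorem stmt18_general [Fintype ι] {κ : Type*} (k : ℝ) (Q : Matrix ι ι ℝ) (c d : ι → ℝ)
    (A : Matrix κ ι ℝ) (b : κ → ℝ) :
    {x : EReal | ∃ (z : ι → ℝ) (y : ι → ℝ) (W : Matrix (ι ⊕ ι) (ι ⊕ ι) ℝ),
        (∀ i, z i ∈ Set.Icc (0 : ℝ) 1) ∧ (∑ i, z i) ≤ k ∧
        (∀ i, A.mulVec y i ≤ b i) ∧
        W.IsSymm ∧
        (W - vecMulVec (Sum.elim y z) (Sum.elim y z)).PosSemidef ∧
        (∀ i, W (.inr i) (.inr i) = z i) ∧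
        (∀ i, W (.inl i) (.inr i) = y i) ∧
        x = ((∑ i, c i * z i + (1 / 2) * frob Q W.toBlocks₁₁ + ∑ i, d i * y i : ℝ) : EReal)} =
      {x : EReal | ∃ (z : ι → ℝ) (y : ι → ℝ) (X : Matrix ι ι ℝ),
        (∀ i, z i ∈ Set.Icc (0 : ℝ) 1) ∧ (∑ i, z i) ≤ k ∧
        (∀ i, A.mulVec y i ≤ b i) ∧
        X.IsSymm ∧
        (X - vecMulVec y y).PosSemidef ∧
        (∀ i, y i ^ 2 ≤ X i i * z i) ∧
        x = ((∑ i, c i * z i + (1 / 2) * frob Q X + ∑ i, d i * y i : ℝ) : EReal)} := by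
  ext v
  constructor
  · rintro ⟨z, y, W, hz, hk, hA, -, hW, hWz, hWy, rfl⟩
    obtain ⟨hX, hyX⟩ := (exists_shor_matrix_iff_perspective hz).mp ⟨W, hW, hWz, hWy, rfl⟩
    exact ⟨z, y, W.toBlocks₁₁, hz, hk, hA, isSymm_of_posSemidef_sub_vecMulVec_self hX, hX, hyX, rfl⟩
  · rintro ⟨z, y, X, hz, hk, hA, -, hX, hyX, rfl⟩
    obtain ⟨W, hW, hWz, hWy, rfl⟩ := (exists_shor_matrix_iff_perspective hz).mpr ⟨hX, hyX⟩
    exact ⟨z, y, W, hz, hk, hA, isSymm_of_posSemidef_sub_vecMulVec_self hW, hW, hWz, hWy, rfl⟩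

end Relaxations

/-- Proposition EC.2 / Han–Gómez–Küçükyavuz equivalence:
the Shor relaxation (EC.2) of logically constrained quadratic optimization
equals the optimal perspective relaxation (EC.4). -/
theorem stmt18 {n l : ℕ} (hn : 1 ≤ n) (k : ℕ)
    (Q : Matrix (Fin n) (Fin n) ℝ) (hQ : Q.PosSemidef)
    (c : Fin n → ℝ) (hc : ∀ i, 0 ≤ c i) (d : Fin n → ℝ)
    (A : Matrix (Fin l) (Fin n) ℝ) (b : Fin l → ℝ) :
    sInf {x : EReal | ∃ (z : Fin n → ℝ) (y : Fin n → ℝ)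
        (W : Matrix (Fin n ⊕ Fin n) (Fin n ⊕ Fin n) ℝ),
        (∀ i, z i ∈ Set.Icc (0 : ℝ) 1) ∧ (∑ i, z i) ≤ (k : ℝ) ∧
        (∀ i, A.mulVec y i ≤ b i) ∧
        W.IsSymm ∧
        (W - Matrix.vecMulVec (Sum.elim y z) (Sum.elim y z)).PosSemidef ∧
        (∀ i : Fin n, W (Sum.inr i) (Sum.inr i) = z i) ∧
        (∀ i : Fin n, W (Sum.inl i) (Sum.inr i) = y i) ∧
        x = ((∑ i, c i * z i
              + (1 / 2) * frob Q (Matrix.of fun i j : Fin n =>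
                  W (Sum.inl i) (Sum.inl j))
              + ∑ i, d i * y i : ℝ) : EReal)} =
      sInf {x : EReal | ∃ (z : Fin n → ℝ) (y : Fin n → ℝ)
        (X : Matrix (Fin n) (Fin n) ℝ),
        (∀ i, z i ∈ Set.Icc (0 : ℝ) 1) ∧ (∑ i, z i) ≤ (k : ℝ) ∧
        (∀ i, A.mulVec y i ≤ b i) ∧
        X.IsSymm ∧
        (X - Matrix.vecMulVec y y).PosSemidef ∧
        (∀ i : Fin n, (y i) ^ 2 ≤ X i i * z i) ∧
        x = ((∑ i, c i * z i + (1 / 2) * frob Q X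
              + ∑ i, d i * y i : ℝ) : EReal)} := by
  exact congrArg sInf (stmt18_general k Q c d A b)
end

section
/- Let n ≥ m ≥ 1, let u_1,…,u_m ∈ ℝ^n be orthonormal vectors, and let α ∈ [0,1]. For i ∈ [m] define w_i ∈ ℝ^{m+n} as the vector whose first m coordinates are zero and whose last n coordinates are u_i, let e_i ∈ ℝ^{m+n} be the i-th standard basis vector, let K_i := e_i w_i^⊤ + w_i e_i^⊤ ∈ S^{m+n}, and S := Σ_{i=1}^m K_i. Then the (m+n)²×(m+n)² matrix I_{(m+n)²} + α·(S ⊗ S) + (1−α)·Σ_{i=1}^m (K_i ⊗ K_i) is positive semidefinite, where ⊗ denotes the Kronecker product of matrices. -/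
open Matrix Kronecker

/-- The matrix `Kᵢ = eᵢ wᵢᵀ + wᵢ eᵢᵀ ∈ S^{m+n}`, where `eᵢ` is the `i`-th
standard basis vector of `ℝ^{m+n}` and `wᵢ` has first `m` coordinates zero and
last `n` coordinates `uᵢ`. -/
def Kmat {n m : ℕ} (u : Fin m → Fin n → ℝ) (i : Fin m) :
    Matrix (Fin (m + n)) (Fin (m + n)) ℝ :=
  Matrix.vecMulVec (Pi.single (Fin.castAdd n i) (1 : ℝ))
      (Fin.append (fun _ => (0 : ℝ)) (u i))
    + Matrix.vecMulVec (Fin.append (fun _ => (0 : ℝ)) (u i))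
        (Pi.single (Fin.castAdd n i) (1 : ℝ))

/-!
Orthonormality of the `uᵢ` makes the `Kᵢ` symmetric with `Kᵢ³ = Kᵢ` and `Kᵢ Kⱼ = 0` for `i ≠ j`.
Symmetric matrices `T` with `T³ = T` are stable under Kronecker products and under sums of mutually
annihilating families, so both `S ⊗ S` and `∑ᵢ Kᵢ ⊗ Kᵢ` are of this kind. The eigenvalues of such a
`T` lie in `{-1, 0, 1}`, so `1 + T` is positive semidefinite, and the matrix of the theorem is the
convex combination of `1 + S ⊗ S` and `1 + ∑ᵢ Kᵢ ⊗ Kᵢ` with weights `α` and `1 - α`.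
-/

theorem sum_pow_of_pairwise_mul_eq_zero {ι R : Type*} [Semiring R] {s : Finset ι} {a : ι → R}
    (ha : (s : Set ι).Pairwise (a · * a · = 0)) {k : ℕ} (hk : k ≠ 0) :
    (∑ i ∈ s, a i) ^ k = ∑ i ∈ s, a i ^ k := by
  induction k, Nat.one_le_iff_ne_zero.mpr hk using Nat.le_induction with
  | base => simp only [pow_one]
  | succ k hk ih =>
    rw [pow_succ, ih (by lia), Finset.sum_mul_sum]
    refine Finset.sum_congr rfl fun i hi => ?_
    have cross_terms : ∀ j ∈ s, j ≠ i → a i ^ k * a j = 0 := fun j hj hji => by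
      rw [← pow_sub_one_mul (by lia : k ≠ 0), mul_assoc, ha hi hj hji.symm, mul_zero]
    rw [Finset.sum_eq_single_of_mem i hi cross_terms, pow_succ]

/-- A self-adjoint tripotent: a self-adjoint element equal to its own cube. For a Hermitian matrix
this says that all eigenvalues lie in `{-1, 0, 1}`. -/
structure IsSelfAdjointTripotent {R : Type*} [Monoid R] [Star R] (T : R) : Prop where
  isSelfAdjoint : IsSelfAdjoint T
  pow_three_eq : T ^ 3 = T

namespace IsSelfAdjointTripotent

theorem sum {ι R : Type*} [Semiring R] [StarRing R] {s : Finset ι} {T : ι → R}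
    (hT : ∀ i ∈ s, IsSelfAdjointTripotent (T i)) (hmul : (s : Set ι).Pairwise (T · * T · = 0)) :
    IsSelfAdjointTripotent (∑ i ∈ s, T i) where
  isSelfAdjoint := isSelfAdjoint_sum s fun i hi => (hT i hi).isSelfAdjoint
  pow_three_eq := by
    rw [sum_pow_of_pairwise_mul_eq_zero hmul three_ne_zero]
    exact Finset.sum_congr rfl fun i hi => (hT i hi).pow_three_eq

theorem isStarProjection_sq {R : Type*} [Monoid R] [StarMul R] {T : R}
    (hT : IsSelfAdjointTripotent T) : IsStarProjection (T ^ 2) where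
  isIdempotentElem := by rw [IsIdempotentElem, ← pow_add, pow_succ, hT.pow_three_eq, sq]
  isSelfAdjoint := hT.isSelfAdjoint.pow 2

section StarRing

variable {R : Type*} [Ring R] [StarRing R] {T : R}

theorem isStarProjection_half_add_sq [Algebra ℚ R] (hT : IsSelfAdjointTripotent T) :
    IsStarProjection ((1 / 2 : ℚ) • (T + T ^ 2)) where
  isIdempotentElem := by
    have sq_mul_sq : T ^ 2 * T ^ 2 = T ^ 2 := hT.isStarProjection_sq.isIdempotentElem
    have mul_sq : T * T ^ 2 = T := by rw [← pow_succ', hT.pow_three_eq]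
    have sq_mul : T ^ 2 * T = T := by rw [← pow_succ, hT.pow_three_eq]
    rw [IsIdempotentElem, smul_mul_smul_comm, add_mul, mul_add, mul_add, sq_mul_sq, mul_sq, sq_mul,
      ← sq T]
    module
  isSelfAdjoint := by
    rw [IsSelfAdjoint, star_rat_smul, (hT.isSelfAdjoint.add (hT.isSelfAdjoint.pow 2)).star_eq]

theorem one_add_nonneg [Algebra ℚ R] [PartialOrder R] [StarOrderedRing R]
    (hT : IsSelfAdjointTripotent T) : 0 ≤ 1 + T := by
  -- `1 - T ^ 2` and `(T + T ^ 2) / 2` are the spectral projections of `T` for `0` and `1`.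
  have decomposition :
      1 + T = (1 - T ^ 2) + ((1 / 2 : ℚ) • (T + T ^ 2) + (1 / 2 : ℚ) • (T + T ^ 2)) := by
    module
  have half_nonneg := hT.isStarProjection_half_add_sq.nonneg
  rw [decomposition]
  exact add_nonneg hT.isStarProjection_sq.one_sub.nonneg (add_nonneg half_nonneg half_nonneg)

end StarRing

section Matrix

variable {l m : Type*} [Fintype l] [DecidableEq l] [Fintype m] [DecidableEq m]

theorem kronecker {R : Type*} [CommSemiring R] [StarRing R] {A : Matrix l l R} {B : Matrix m m R}
    (hA : IsSelfAdjointTripotent A) (hB : IsSelfAdjointTripotent B) :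
    IsSelfAdjointTripotent (A ⊗ₖ B) where
  isSelfAdjoint := by
    rw [IsSelfAdjoint, star_eq_conjTranspose, conjTranspose_kronecker, ← star_eq_conjTranspose,
      ← star_eq_conjTranspose, hA.isSelfAdjoint.star_eq, hB.isSelfAdjoint.star_eq]
  pow_three_eq := by
    rw [pow_three, ← mul_kronecker_mul, ← mul_kronecker_mul, ← pow_three, ← pow_three,
      hA.pow_three_eq, hB.pow_three_eq]

open scoped ComplexOrder MatrixOrder in
theorem posSemidef_one_add {𝕜 : Type*} [RCLike 𝕜] {T : Matrix l l 𝕜}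
    (hT : IsSelfAdjointTripotent T) : (1 + T).PosSemidef :=
  nonneg_iff_posSemidef.mp hT.one_add_nonneg

end Matrix

end IsSelfAdjointTripotent

open scoped ComplexOrder in
theorem posSemidef_one_add_convexComb_kronecker {ι l 𝕜 : Type*} [Fintype ι] [Fintype l]
    [DecidableEq l] [RCLike 𝕜] {K : ι → Matrix l l 𝕜} (hK : ∀ i, IsSelfAdjointTripotent (K i))
    (hmul : Pairwise (K · * K · = 0)) {α : ℝ} (hα : α ∈ Set.Icc (0 : ℝ) 1) :
    (1 + α • ((∑ i, K i) ⊗ₖ (∑ i, K i)) + (1 - α) • ∑ i, K i ⊗ₖ K i).PosSemidef := by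
  have sum_tripotent : IsSelfAdjointTripotent (∑ i, K i) :=
    .sum (fun i _ => hK i) (hmul.set_pairwise _)
  have kronecker_mul : Pairwise fun i j => (K i ⊗ₖ K i) * (K j ⊗ₖ K j) = 0 := fun i j hij => by
    simp [← mul_kronecker_mul, hmul hij]
  have sum_kronecker_tripotent : IsSelfAdjointTripotent (∑ i, K i ⊗ₖ K i) :=
    .sum (fun i _ => (hK i).kronecker (hK i)) (kronecker_mul.set_pairwise _)
  convert ((sum_tripotent.kronecker sum_tripotent).posSemidef_one_add.smul hα.1).add
    (sum_kronecker_tripotent.posSemidef_one_add.smul (sub_nonneg.mpr hα.2)) using 1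
  module

/-- The symmetrized outer product `x yᵀ + y xᵀ` of two vectors, of which `Kmat u i` is the instance
`x = eᵢ`, `y = wᵢ`. -/
def symmVecMulVec {ι R : Type*} [Mul R] [Add R] (x y : ι → R) : Matrix ι ι R :=
  vecMulVec x y + vecMulVec y x

section symmVecMulVec

variable {ι R : Type*} [Fintype ι] [CommSemiring R]

theorem symmVecMulVec_mul_symmVecMulVec_eq_zero {x y x' y' : ι → R} (hxx : x ⬝ᵥ x' = 0)
    (hxy : x ⬝ᵥ y' = 0) (hyx : y ⬝ᵥ x' = 0) (hyy : y ⬝ᵥ y' = 0) :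
    symmVecMulVec x y * symmVecMulVec x' y' = 0 := by
  simp [symmVecMulVec, add_mul, mul_add, vecMulVec_mul_vecMulVec, hxx, hxy, hyx, hyy]

theorem isSelfAdjointTripotent_symmVecMulVec [DecidableEq ι] [StarRing R] [TrivialStar R]
    {x y : ι → R} (hxx : x ⬝ᵥ x = 1) (hyy : y ⬝ᵥ y = 1) (hxy : x ⬝ᵥ y = 0) :
    IsSelfAdjointTripotent (symmVecMulVec x y) where
  isSelfAdjoint := by
    rw [IsSelfAdjoint, star_eq_conjTranspose, conjTranspose_eq_transpose_of_trivial, symmVecMulVec,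
      transpose_add, transpose_vecMulVec, transpose_vecMulVec, add_comm]
  pow_three_eq := by
    have hyx : y ⬝ᵥ x = 0 := by rw [dotProduct_comm, hxy]
    simp [symmVecMulVec, pow_three, add_mul, mul_add, vecMulVec_mul_vecMulVec, hxx, hyy, hxy, hyx]

end symmVecMulVec

theorem append_dotProduct_append {m n : ℕ} {R : Type*} [NonUnitalNonAssocSemiring R]
    (a a' : Fin m → R) (b b' : Fin n → R) :
    Fin.append a b ⬝ᵥ Fin.append a' b' = a ⬝ᵥ a' + b ⬝ᵥ b' := by
  simp [dotProduct, Fin.sum_univ_add]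

section Kmat

variable {n m : ℕ} {u : Fin m → Fin n → ℝ}

theorem Kmat_eq_symmVecMulVec (i : Fin m) :
    Kmat u i = symmVecMulVec (Pi.single (Fin.castAdd n i) 1) (Fin.append 0 (u i)) :=
  rfl

theorem pairwise_Kmat_mul_Kmat_eq_zero (hu : Pairwise (u · ⬝ᵥ u · = 0)) :
    Pairwise (Kmat u · * Kmat u · = 0) := by
  intro i j hij
  simp only [Kmat_eq_symmVecMulVec]
  exact symmVecMulVec_mul_symmVecMulVec_eq_zero (by simp [hij]) (by simp) (by simp)
    (by simp [append_dotProduct_append, hu hij])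

theorem isSelfAdjointTripotent_Kmat {i : Fin m} (hu : u i ⬝ᵥ u i = 1) :
    IsSelfAdjointTripotent (Kmat u i) := by
  rw [Kmat_eq_symmVecMulVec]
  exact isSelfAdjointTripotent_symmVecMulVec (by simp) (by simp [append_dotProduct_append, hu])
    (by simp)

end Kmat

/-- Lemma EC.3, partial redundancy of Kronecker constraints.
For orthonormal `u₁,…,u_m ∈ ℝⁿ` and `α ∈ [0,1]`,
`I + α (S ⊗ S) + (1−α) Σᵢ (Kᵢ ⊗ Kᵢ) ⪰ 0`, where `S = Σᵢ Kᵢ`. -/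
theorem stmt19 {n m : ℕ} (hm : 1 ≤ m) (hmn : m ≤ n)
    (u : Fin m → Fin n → ℝ)
    (hu : ∀ i j, (∑ p, u i p * u j p) = if i = j then (1 : ℝ) else 0)
    (α : ℝ) (hα : α ∈ Set.Icc (0 : ℝ) 1) :
    ((1 : Matrix (Fin (m + n) × Fin (m + n)) (Fin (m + n) × Fin (m + n)) ℝ)
        + α • ((∑ i, Kmat u i) ⊗ₖ (∑ i, Kmat u i))
        + (1 - α) • ∑ i, (Kmat u i ⊗ₖ Kmat u i)).PosSemidef := by
  have unit : ∀ i, u i ⬝ᵥ u i = 1 := fun i => by simp [dotProduct, hu]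
  have orthogonal : Pairwise (u · ⬝ᵥ u · = 0) := fun i j hij => by simp [dotProduct, hu, hij]
  exact posSemidef_one_add_convexComb_kronecker (fun i => isSelfAdjointTripotent_Kmat (unit i))
    (pairwise_Kmat_mul_Kmat_eq_zero orthogonal) hα
end
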